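/- Global existence for the null-form wave equation in de Sitter spacetime: let f, g ∈ C_c^∞(ℝⁿ). There exists ε_0 > 0 such that for every ε ∈ [0, ε_0] the Cauchy problem □_g φ - ∂_t φ = Q(φ, φ) on [0, ∞) × ℝⁿ, with initial data φ(0, x) = ε f(x) and ∂_t φ(0, x) = ε g(x) for all x ∈ ℝⁿ, has a unique smooth solution φ : [0, ∞) × ℝⁿ → ℝ. -/

import Mathlib

/-!
The proof rests on Nirenberg's transformation. By the chain rule,
`□F(φ) - ∂ₜF(φ) = F'(φ) (□φ - ∂ₜφ) + F''(φ) Q(φ, φ)` (`dBox_comp`), so `φ` solves the nonlinear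
equation exactly when `v = 1 - e^{-φ}` solves the linear equation
`∂ₜ²v + (n/2 + 1) ∂ₜv = e^{-t} Δv`.

*Existence.* The linear problem is solved by a Fourier integral: each mode satisfies
`a'' + c a' + e^{-t} |2πξ|² a = 0` with `c = n/2 + 1 ≥ 1`. For this equation `e^t` times the energy
`(a')² + e^{-t} |2πξ|² a²` is nonincreasing, so the velocity is `O(e^{-t/2})` for `t ≥ 0`, which is
integrable, and the amplitude is bounded uniformly in time (`mode_bound_pos`). Integrating over the
frequencies bounds `|v|` on `t ≥ 0` by weighted `L¹` norms of the Fourier transforms of the data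
(`norm_oscI_le`), which tend to `0` with `ε` because the data tend to `0` in the Schwartz space
(`schwartz_family`, `specBound_tendsto`). Hence `v < 1/2` for small `ε` and `φ = -log (1 - v)` is a
solution. The modes are solved for all real `t`, so `v` is smooth on all of `ℝ × ℝⁿ`; for `t < 0` it
may leave `(-∞, 1)`, and the logarithm is therefore replaced by a globally smooth function `cutLog`
agreeing with it where it matters.

*Uniqueness.* The difference of `e^{-φ}` and `e^{-ψ}` solves the linear equation with zero data.
An energy with a weight supported in a solid paraboloid with spacelike boundary is nonincreasing
(`energy_pointwise`), so it vanishes, and with it the time derivative of the difference.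
-/

open Real MeasureTheory

/-- Time derivative ∂ₜ of a function on ℝ × ℝⁿ. -/
noncomputable def pT (n : ℕ) (φ : ℝ × (Fin n → ℝ) → ℝ) : ℝ × (Fin n → ℝ) → ℝ :=
  fun p => deriv (fun s => φ (s, p.2)) p.1

/-- Spatial derivative ∂ₓᵢ of a function on ℝ × ℝⁿ. -/
noncomputable def pX (n : ℕ) (i : Fin n) (φ : ℝ × (Fin n → ℝ) → ℝ) : ℝ × (Fin n → ℝ) → ℝ :=
  fun p => deriv (fun s => φ (p.1, Function.update p.2 i s)) (p.2 i)

/-- Mixed spatial derivative D^I = ∂ₓ₁^{I₁} ⋯ ∂ₓₙ^{Iₙ}. -/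
noncomputable def Dmix (n : ℕ) (I : Fin n → ℕ) (φ : ℝ × (Fin n → ℝ) → ℝ) : ℝ × (Fin n → ℝ) → ℝ :=
  (List.ofFn (fun i : Fin n => (pX n i)^[I i])).foldr (· ∘ ·) id φ

/-- The de Sitter wave operator □_g φ = -∂ₜ²φ - (n/2)∂ₜφ + e^{-t} Σᵢ ∂ₓᵢ²φ. -/
noncomputable def dBox (n : ℕ) (φ : ℝ × (Fin n → ℝ) → ℝ) : ℝ × (Fin n → ℝ) → ℝ :=
  fun p => -(pT n (pT n φ) p) - ((n : ℝ) / 2) * pT n φ p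
    + Real.exp (-p.1) * ∑ i : Fin n, pX n i (pX n i φ) p

/-- The de Sitter null form Q(φ,ψ) = -φₜψₜ + e^{-t} Σᵢ φᵢψᵢ. -/
noncomputable def nullQ (n : ℕ) (φ ψ : ℝ × (Fin n → ℝ) → ℝ) : ℝ × (Fin n → ℝ) → ℝ :=
  fun p => -(pT n φ p) * pT n ψ p + Real.exp (-p.1) * ∑ i : Fin n, pX n i φ p * pX n i ψ p

/-! ### Global solvability of the mode equation -/

/-- First-order form of `a'' + c a' + e^{-t} s a = 0`, acting on `(a, a')`. -/
noncomputable def odeField (c s t : ℝ) : ℝ × ℝ →L[ℝ] ℝ × ℝ :=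
  (ContinuousLinearMap.snd ℝ ℝ ℝ).prod
    ((-c) • ContinuousLinearMap.snd ℝ ℝ ℝ - (Real.exp (-t) * s) • ContinuousLinearMap.fst ℝ ℝ ℝ)

lemma odeField_apply (c s t : ℝ) (y : ℝ × ℝ) :
    odeField c s t y = (y.2, -c * y.2 - Real.exp (-t) * s * y.1) := by
  simp [odeField]

lemma odeField_bound (c s T t : ℝ) (ht : |t| ≤ T) (y : ℝ × ℝ) :
    ‖odeField c s t y‖ ≤ (1 + |c| + Real.exp T * |s|) * ‖y‖ := by
  rw [odeField_apply]
  have h1 : |y.1| ≤ ‖y‖ := norm_fst_le y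
  have h2 : |y.2| ≤ ‖y‖ := norm_snd_le y
  have he : Real.exp (-t) ≤ Real.exp T := Real.exp_le_exp.2 (by linarith [neg_abs_le t])
  have hy := norm_nonneg y
  have hs : Real.exp (-t) * |s| ≤ Real.exp T * |s| := by gcongr
  have hs0 : 0 ≤ Real.exp (-t) * |s| := by positivity
  refine max_le ?_ ?_
  · simp only [Real.norm_eq_abs]
    have : 0 ≤ (|c| + Real.exp T * |s|) * ‖y‖ := by positivity
    nlinarith
  · simp only [Real.norm_eq_abs]
    calc |-c * y.2 - Real.exp (-t) * s * y.1| ≤ |-c * y.2| + |Real.exp (-t) * s * y.1| := abs_sub _ _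
      _ = |c| * |y.2| + Real.exp (-t) * |s| * |y.1| := by
          rw [abs_mul, abs_mul, abs_mul, abs_neg, abs_of_pos (Real.exp_pos _)]
      _ ≤ |c| * ‖y‖ + Real.exp T * |s| * ‖y‖ := by gcongr
      _ ≤ _ := by nlinarith

/-- The increments of the Picard iteration for the first-order system with datum `y0`: the solution
is their sum. They are defined for all spectral parameters `s` at once, so that joint continuity
(hence measurability of the solution in `s`) comes for free. -/
noncomputable def picY (c : ℝ) (y0 : ℝ × ℝ) : ℕ → ℝ → ℝ → ℝ × ℝ
  | 0 => fun _ _ => y0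
  | k + 1 => fun s t => ∫ τ in (0 : ℝ)..t, odeField c s τ (picY c y0 k s τ)

lemma picY_continuous (c : ℝ) (y0 : ℝ × ℝ) (k : ℕ) :
    Continuous (fun p : ℝ × ℝ => picY c y0 k p.1 p.2) := by
  induction k with
  | zero => exact continuous_const
  | succ k ih =>
    simp only [picY]
    have hc : Continuous (Function.uncurry fun (p : ℝ × ℝ) (τ : ℝ) =>
        odeField c p.1 τ (picY c y0 k p.1 τ)) := by
      simp only [odeField_apply]
      have h : Continuous (fun q : (ℝ × ℝ) × ℝ => picY c y0 k q.1.1 q.2) :=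
        ih.comp ((continuous_fst.comp continuous_fst).prodMk continuous_snd)
      unfold Function.uncurry
      fun_prop
    exact intervalIntegral.continuous_parametric_intervalIntegral_of_continuous hc continuous_snd

/-- The factorial gain from iterated integration, which makes the Picard series converge on all
of `ℝ`. -/
lemma picY_bound (c : ℝ) (y0 : ℝ × ℝ) (s T : ℝ) (k : ℕ) (t : ℝ) (ht : |t| ≤ T) :
    ‖picY c y0 k s t‖ ≤ ‖y0‖ * ((1 + |c| + Real.exp T * |s|) ^ k * |t| ^ k / k.factorial) := by
  induction k generalizing t with
  | zero => simp [picY]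
  | succ k ih =>
    set K := 1 + |c| + Real.exp T * |s| with hK
    have hK0 : 0 ≤ K := by positivity
    simp only [picY]
    have hcont : Continuous (fun τ => odeField c s τ (picY c y0 k s τ)) := by
      simp only [odeField_apply]
      have h : Continuous (fun τ : ℝ => picY c y0 k s τ) :=
        (picY_continuous c y0 k).comp (Continuous.prodMk_right s)
      fun_prop
    calc ‖∫ τ in (0 : ℝ)..t, odeField c s τ (picY c y0 k s τ)‖
        ≤ ∫ τ in Set.uIoc 0 t, ‖odeField c s τ (picY c y0 k s τ)‖ :=
          intervalIntegral.norm_integral_le_integral_norm_uIoc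
      _ ≤ ∫ τ in Set.uIoc 0 t, (K * ‖y0‖ * K ^ k / k.factorial) * |τ - 0| ^ k := by
          apply setIntegral_mono_on
          · exact (hcont.norm.integrableOn_uIcc).mono_set Set.uIoc_subset_uIcc
          · exact (Continuous.integrableOn_uIcc (by fun_prop)).mono_set Set.uIoc_subset_uIcc
          · exact measurableSet_uIoc
          · intro τ hτ
            have hτ' : |τ| ≤ T := by
              refine le_trans ?_ ht
              have := Set.uIoc_subset_uIcc hτ
              have h := Set.abs_sub_left_of_mem_uIcc this
              simpa using h
            refine (odeField_bound c s T τ hτ' _).trans ?_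
            calc K * ‖picY c y0 k s τ‖ ≤ K * (‖y0‖ * (K ^ k * |τ| ^ k / k.factorial)) := by
                  gcongr; exact ih τ hτ'
              _ = _ := by rw [sub_zero]; ring
      _ = _ := by
          rw [integral_const_mul, integral_pow_abs_sub_uIoc, Nat.factorial_succ]
          have : (k.factorial : ℝ) ≠ 0 := by positivity
          push_cast
          rw [sub_zero]
          field_simp
          ring

lemma picY_hasDerivAt (c : ℝ) (y0 : ℝ × ℝ) (s : ℝ) (k : ℕ) (t : ℝ) :
    HasDerivAt (picY c y0 (k + 1) s) (odeField c s t (picY c y0 k s t)) t := by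
  have hcont : Continuous (fun τ => odeField c s τ (picY c y0 k s τ)) := by
    simp only [odeField_apply]
    have h : Continuous (fun τ : ℝ => picY c y0 k s τ) :=
      (picY_continuous c y0 k).comp (Continuous.prodMk_right s)
    fun_prop
  exact hcont.integral_hasStrictDerivAt 0 t |>.hasDerivAt

lemma picY_summable (c : ℝ) (y0 : ℝ × ℝ) (s t : ℝ) :
    Summable (fun k => picY c y0 k s t) := by
  refine Summable.of_norm_bounded (g := fun k : ℕ => ‖y0‖ *
    (((1 + |c| + Real.exp |t| * |s|) * |t|) ^ k / k.factorial)) ?_ ?_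
  · exact (Real.summable_pow_div_factorial _).mul_left _
  · intro k
    rw [mul_pow]
    exact picY_bound c y0 s |t| k t le_rfl

/-- Global solvability of the linear mode equation, with measurable dependence on the spectral
parameter `s`. -/
lemma ode_exists (c : ℝ) (y0 : ℝ × ℝ) :
    ∃ Y : ℝ → ℝ → ℝ × ℝ, (∀ t, Measurable fun s => Y s t) ∧ (∀ s, Y s 0 = y0) ∧
      ∀ s t, HasDerivAt (Y s) (odeField c s t (Y s t)) t := by
  refine ⟨fun s t => ∑' k, picY c y0 k s t, ?_, ?_, ?_⟩
  · intro t
    refine measurable_of_tendsto_metrizable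
      (f := fun N s => ∑ k ∈ Finset.range N, picY c y0 k s t) ?_ ?_
    · intro N
      refine Continuous.measurable ?_
      refine continuous_finsetSum _ fun k _ => ?_
      exact (picY_continuous c y0 k).comp (Continuous.prodMk_left t)
    · rw [tendsto_pi_nhds]
      intro s
      exact (picY_summable c y0 s t).hasSum.tendsto_sum_nat
  · intro s
    change ∑' k, picY c y0 k s 0 = y0
    rw [tsum_eq_single 0]
    · rfl
    · intro k hk
      obtain ⟨j, rfl⟩ := Nat.exists_eq_succ_of_ne_zero hk
      simp [picY]
  · intro s t
    set T := |t| + 1 with hT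
    set K := 1 + |c| + Real.exp T * |s| with hK
    have hK0 : 0 ≤ K := by positivity
    have hT0 : 0 ≤ T := by positivity
    let G' : ℕ → ℝ → ℝ × ℝ := fun k τ => Nat.casesOn k 0 (fun j => odeField c s τ (picY c y0 j s τ))
    let u : ℕ → ℝ := fun k => Nat.casesOn k 0 (fun j => K * (‖y0‖ * ((K * T) ^ j / j.factorial)))
    have hu : Summable u := by
      rw [← summable_nat_add_iff 1]
      exact ((Real.summable_pow_div_factorial _).mul_left _).mul_left _
    have key := hasDerivAt_tsum_of_isPreconnected (g := fun k τ => picY c y0 k s τ) (g' := G')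
      (u := u) (t := Metric.ball (0 : ℝ) T) (y₀ := 0) (y := t) hu Metric.isOpen_ball
      (convex_ball _ _).isPreconnected ?_ ?_ (by simp; positivity) (picY_summable c y0 s 0)
      (by simp [hT])
    · have hs : Summable (fun k => G' k t) := by
        rw [← summable_nat_add_iff 1]
        exact (picY_summable c y0 s t).mapL (odeField c s t)
      have he : ∑' k, G' k t = odeField c s t (∑' k, picY c y0 k s t) := by
        rw [hs.tsum_eq_zero_add, (odeField c s t).map_tsum (picY_summable c y0 s t)]
        simp [G']
      rw [he] at key
      exact key
    · rintro (_ | k) τ hτ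
      · exact hasDerivAt_const _ _
      · exact picY_hasDerivAt c y0 s k τ
    · rintro (_ | k) τ hτ
      · simp [G', u]
      · have hτ' : |τ| ≤ T := by simpa using (Metric.mem_ball.1 hτ).le
        refine (odeField_bound c s T τ hτ' _).trans ?_
        have := picY_bound c y0 s T k τ hτ'
        simp only [u]
        rw [← hK] at this ⊢
        refine mul_le_mul_of_nonneg_left (this.trans ?_) hK0
        rw [mul_pow]
        gcongr

/-! ### Energy bounds for modes -/

section modes

variable {c s : ℝ} {Y : ℝ → ℝ × ℝ}

lemma mode_fst (hY : ∀ t, HasDerivAt Y (odeField c s t (Y t)) t) (t : ℝ) :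
    HasDerivAt (fun t => (Y t).1) (Y t).2 t := by
  have := (hY t).fst
  rwa [odeField_apply] at this

lemma mode_snd (hY : ∀ t, HasDerivAt Y (odeField c s t (Y t)) t) (t : ℝ) :
    HasDerivAt (fun t => (Y t).2) (-c * (Y t).2 - Real.exp (-t) * s * (Y t).1) t := by
  have := (hY t).snd
  rwa [odeField_apply] at this

/-- The energy `(a')² + e^{-t} s a²` of a mode `Y = (a, a')`. -/
noncomputable def modeE (s : ℝ) (Y : ℝ → ℝ × ℝ) (t : ℝ) : ℝ :=
  (Y t).2 ^ 2 + Real.exp (-t) * s * (Y t).1 ^ 2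

lemma modeE_hasDerivAt (hY : ∀ t, HasDerivAt Y (odeField c s t (Y t)) t) (b t : ℝ) :
    HasDerivAt (fun t => Real.exp (b * t) * modeE s Y t)
      (Real.exp (b * t) * ((b - 2 * c) * (Y t).2 ^ 2 + (b - 1) * (Real.exp (-t) * s * (Y t).1 ^ 2)))
      t := by
  have h1 := mode_fst hY t
  have h2 := mode_snd hY t
  have he : HasDerivAt (fun t => Real.exp (b * t)) (Real.exp (b * t) * (b * 1)) t :=
    ((hasDerivAt_id t).const_mul b).exp
  have he' : HasDerivAt (fun t => Real.exp (-t)) (Real.exp (-t) * (-1)) t :=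
    (hasDerivAt_id t).neg.exp
  have := he.mul ((h2.pow 2).add ((he'.mul_const s).mul (h1.pow 2)))
  refine this.congr_deriv ?_
  simp
  ring

/-- `e^t E` decreases: the potential part of the energy carries the factor `e^{-t}`, and the kinetic
part is damped at rate `2 c ≥ 1`. -/
lemma modeE_antitone (hc : 1 ≤ c) (hY : ∀ t, HasDerivAt Y (odeField c s t (Y t)) t) :
    Antitone (fun t => Real.exp (1 * t) * modeE s Y t) := by
  refine antitone_of_hasDerivAt_nonpos (modeE_hasDerivAt hY 1) fun t => ?_
  have : 0 ≤ Real.exp (1 * t) * (Y t).2 ^ 2 := by positivity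
  simp only [Pi.zero_apply]
  nlinarith

/-- Control of the energy for negative times, where only bounds locally uniform in time are needed. -/
lemma modeE_monotone (hc : 1 ≤ c) (hs : 0 ≤ s)
    (hY : ∀ t, HasDerivAt Y (odeField c s t (Y t)) t) :
    Monotone (fun t => Real.exp ((2 * c) * t) * modeE s Y t) := by
  refine monotone_of_hasDerivAt_nonneg (modeE_hasDerivAt hY (2 * c)) fun t => ?_
  have h1 : 0 ≤ Real.exp (2 * c * t) * (Real.exp (-t) * s * (Y t).1 ^ 2) := by positivity
  simp only [Pi.zero_apply]
  nlinarith

lemma modeE_snd_le (hs : 0 ≤ s) (t : ℝ) : (Y t).2 ^ 2 ≤ modeE s Y t := by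
  have h1 : 0 ≤ Real.exp (-t) * s * (Y t).1 ^ 2 := by positivity
  unfold modeE; linarith

/-- The velocity of a mode decays like `e^{-t/2}`, which is integrable: this is what makes the
amplitude bounded uniformly in time. -/
lemma mode_bound_pos (hc : 1 ≤ c) (hs : 0 ≤ s)
    (hY : ∀ t, HasDerivAt Y (odeField c s t (Y t)) t) (t : ℝ) (ht : 0 ≤ t) :
    |(Y t).1| ≤ |(Y 0).1| + 2 * √(modeE s Y 0) := by
  set D := √(modeE s Y 0) with hD
  have hE0 : 0 ≤ modeE s Y 0 := (sq_nonneg _).trans (modeE_snd_le hs 0)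
  have hv : ∀ r, 0 ≤ r → |(Y r).2| ≤ D * Real.exp (-(r / 2)) := by
    intro r hr
    have h1 := modeE_antitone hc hY hr
    simp only [mul_zero, Real.exp_zero, one_mul] at h1
    have h2 : (Y r).2 ^ 2 ≤ (D * Real.exp (-(r / 2))) ^ 2 := by
      rw [mul_pow, hD, Real.sq_sqrt hE0, ← Real.exp_nat_mul]
      have h3 : Real.exp ((2 : ℕ) * -(r / 2)) = (Real.exp r)⁻¹ := by
        rw [← Real.exp_neg]; congr 1; push_cast; ring
      rw [h3, ← div_eq_mul_inv, le_div_iff₀ (Real.exp_pos _)]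
      have h4 := mul_le_mul_of_nonneg_left (modeE_snd_le (Y := Y) hs r) (Real.exp_pos r).le
      linarith
    exact abs_le_of_sq_le_sq h2 (by positivity)
  have hd : ∀ r : ℝ, HasDerivAt (fun r => 2 * D * Real.exp (-(r / 2)))
      (-(D * Real.exp (-(r / 2)))) r := by
    intro r
    have := (((hasDerivAt_id r).div_const 2).neg.exp).const_mul (2 * D)
    refine this.congr_deriv ?_
    simp; ring
  -- `σ = ±1` gives the two one-sided bounds on the amplitude.
  have key : ∀ σ : ℝ, |σ| = 1 → σ * (Y t).1 ≤ σ * (Y 0).1 + 2 * D := by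
    intro σ hσ
    have hder : ∀ r : ℝ, HasDerivAt (fun r => σ * (Y r).1 + 2 * D * Real.exp (-(r / 2)))
        (σ * (Y r).2 + -(D * Real.exp (-(r / 2)))) r :=
      fun r => ((mode_fst hY r).const_mul σ).add (hd r)
    have hanti : AntitoneOn (fun r => σ * (Y r).1 + 2 * D * Real.exp (-(r / 2))) (Set.Ici 0) := by
      refine antitoneOn_of_deriv_nonpos (convex_Ici 0)
        (fun r _ => (hder r).continuousAt.continuousWithinAt)
        (fun r _ => (hder r).differentiableAt.differentiableWithinAt) ?_
      intro r hr
      rw [interior_Ici] at hr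
      rw [(hder r).deriv]
      have h1 : σ * (Y r).2 ≤ |(Y r).2| := by
        calc σ * (Y r).2 ≤ |σ * (Y r).2| := le_abs_self _
          _ = _ := by rw [abs_mul, hσ, one_mul]
      linarith [hv r (le_of_lt hr)]
    have := hanti (Set.mem_Ici.2 le_rfl) (Set.mem_Ici.2 ht) ht
    simp only [zero_div, neg_zero, Real.exp_zero, mul_one] at this
    have h0 : 0 ≤ 2 * D * Real.exp (-(t / 2)) := by positivity
    linarith
  have h1 := key 1 (by simp)
  have h2 := key (-1) (by simp)
  rw [abs_le]
  constructor
  · linarith [neg_abs_le (Y 0).1, le_abs_self (Y 0).1]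
  · linarith [le_abs_self (Y 0).1]

lemma mode_bound_snd (hc : 1 ≤ c) (hs : 0 ≤ s)
    (hY : ∀ t, HasDerivAt Y (odeField c s t (Y t)) t) (T t : ℝ) (ht : |t| ≤ T) :
    |(Y t).2| ≤ Real.exp (c * T) * √(modeE s Y 0) := by
  have hE0 : 0 ≤ modeE s Y 0 := (sq_nonneg _).trans (modeE_snd_le hs 0)
  have hT : 0 ≤ T := (abs_nonneg t).trans ht
  have h2 : (Y t).2 ^ 2 ≤ (Real.exp (c * T) * √(modeE s Y 0)) ^ 2 := by
    rw [mul_pow, Real.sq_sqrt hE0, ← Real.exp_nat_mul]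
    refine (modeE_snd_le hs t).trans ?_
    rcases le_total 0 t with h | h
    · have h1 := modeE_antitone hc hY h
      simp only [mul_zero, Real.exp_zero, one_mul] at h1
      have hE : 0 ≤ modeE s Y t := (sq_nonneg _).trans (modeE_snd_le hs t)
      have h3 : 1 ≤ Real.exp t := Real.one_le_exp h
      have h4 : 1 ≤ Real.exp ((2 : ℕ) * (c * T)) := Real.one_le_exp (by positivity)
      nlinarith
    · have h1 := modeE_monotone hc hs hY h
      simp only [mul_zero, Real.exp_zero, one_mul] at h1
      have h3 : modeE s Y t ≤ Real.exp (-(2 * c * t)) * modeE s Y 0 := by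
        rw [Real.exp_neg, ← div_eq_inv_mul, le_div_iff₀ (Real.exp_pos _)]
        linarith
      refine h3.trans ?_
      gcongr
      push_cast
      have := neg_abs_le t
      nlinarith
  exact abs_le_of_sq_le_sq h2 (by positivity)

lemma mode_bound_fst (hc : 1 ≤ c) (hs : 0 ≤ s)
    (hY : ∀ t, HasDerivAt Y (odeField c s t (Y t)) t) (T t : ℝ) (ht : |t| ≤ T) :
    |(Y t).1| ≤ |(Y 0).1| + T * (Real.exp (c * T) * √(modeE s Y 0)) := by
  have h := (convex_Icc (-T) T).norm_image_sub_le_of_norm_hasDerivWithin_le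
    (f := fun t => (Y t).1) (f' := fun t => (Y t).2) (x := 0) (y := t)
    (C := Real.exp (c * T) * √(modeE s Y 0))
    (fun r _ => (mode_fst hY r).hasDerivWithinAt)
    (fun r hr => mode_bound_snd hc hs hY T r (abs_le.2 hr))
    ⟨by linarith [abs_nonneg t], by linarith [abs_nonneg t]⟩ (abs_le.1 ht)
  simp only [Real.norm_eq_abs, sub_zero] at h
  have h1 : |(Y t).1| ≤ |(Y 0).1| + |(Y t).1 - (Y 0).1| := by
    have := abs_add_le (Y 0).1 ((Y t).1 - (Y 0).1)
    simpa using this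
  have h2 : Real.exp (c * T) * √(modeE s Y 0) * |t| ≤ Real.exp (c * T) * √(modeE s Y 0) * T := by
    gcongr
  linarith

end modes

/-! ### Oscillatory integrals with rapidly decaying symbols -/

/-- Integral of a finite sum plus a term, in a form whose instance arguments are cheap to unify for
operator-valued integrands. -/
lemma integral_add_sum {α E ι : Type*} [MeasurableSpace α] {μ : Measure α} [NormedAddCommGroup E]
    [NormedSpace ℝ E] [Fintype ι] {f : α → E} {g : ι → α → E} (hf : Integrable f μ)
    (hg : ∀ i, Integrable (g i) μ) :
    Integrable (fun a => f a + ∑ i, g i a) μ ∧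
      ∫ a, (f a + ∑ i, g i a) ∂μ = ∫ a, f a ∂μ + ∑ i, ∫ a, g i a ∂μ := by
  have h := integrable_finsetSum Finset.univ fun i _ => hg i
  refine ⟨hf.add h, ?_⟩
  rw [integral_add hf h, integral_finsetSum _ fun i _ => hg i]

/-- Symbols decaying rapidly in the frequency, locally uniformly in time. -/
structure RapidSymbol (n : ℕ) (σ : ℝ → EuclideanSpace ℝ (Fin n) → ℂ) : Prop where
  meas : ∀ t, AEStronglyMeasurable (σ t) volume
  decay : ∀ (T : ℝ) (N : ℕ), ∃ C, ∀ t, |t| ≤ T → ∀ ξ, (1 + ‖ξ‖) ^ N * ‖σ t ξ‖ ≤ C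

/-- The character `e^{2πi x·ξ}`. -/
noncomputable def osc (n : ℕ) (x : Fin n → ℝ) (ξ : EuclideanSpace ℝ (Fin n)) : ℂ :=
  Complex.exp (2 * π * Complex.I * ((∑ i, x i * ξ i : ℝ) : ℂ))

/-- The oscillatory integral `∫ e^{2πi x·ξ} σ(t,ξ) dξ`. -/
noncomputable def oscI (n : ℕ) (σ : ℝ → EuclideanSpace ℝ (Fin n) → ℂ)
    (p : ℝ × (Fin n → ℝ)) : ℂ := ∫ ξ, osc n p.2 ξ * σ p.1 ξ

/-- Multiplication by the symbol `2πi ξ_i` of `∂_{x_i}`. -/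
noncomputable def mulX (n : ℕ) (i : Fin n) (σ : ℝ → EuclideanSpace ℝ (Fin n) → ℂ) :
    ℝ → EuclideanSpace ℝ (Fin n) → ℂ :=
  fun t ξ => 2 * π * Complex.I * (ξ i : ℂ) * σ t ξ

/-- Coordinate functionals on space-time. -/
noncomputable def coordX (n : ℕ) (i : Fin n) : ℝ × (Fin n → ℝ) →L[ℝ] ℝ :=
  (ContinuousLinearMap.proj i).comp (ContinuousLinearMap.snd ℝ ℝ (Fin n → ℝ))

section
variable {n : ℕ}

lemma coordX_apply (i : Fin n) (p : ℝ × (Fin n → ℝ)) : coordX n i p = p.2 i := rfl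

lemma norm_osc (x : Fin n → ℝ) (ξ : EuclideanSpace ℝ (Fin n)) : ‖osc n x ξ‖ = 1 := by
  have : (2 * π * Complex.I * ((∑ i, x i * ξ i : ℝ) : ℂ)) =
      ((2 * π * ∑ i, x i * ξ i : ℝ) : ℂ) * Complex.I := by push_cast; ring
  rw [osc, this, Complex.norm_exp_ofReal_mul_I]

lemma osc_continuous (x : Fin n → ℝ) : Continuous (osc n x) := by
  unfold osc; fun_prop

lemma osc_hasFDerivAt (ξ : EuclideanSpace ℝ (Fin n)) (p : ℝ × (Fin n → ℝ)) :
    HasFDerivAt (fun p : ℝ × (Fin n → ℝ) => osc n p.2 ξ)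
      (∑ i, (coordX n i).smulRight (2 * π * Complex.I * (ξ i : ℂ) * osc n p.2 ξ)) p := by
  have h1 : HasFDerivAt (fun p : ℝ × (Fin n → ℝ) => (∑ i, p.2 i * ξ i : ℝ))
      (∑ i, ξ i • coordX n i) p := by
    refine HasFDerivAt.fun_sum fun i _ => ?_
    exact (coordX n i).hasFDerivAt.mul_const (ξ i)
  have h2 := (((Complex.ofRealCLM.hasFDerivAt.comp p h1)).const_mul
    (2 * π * Complex.I)).cexp
  refine h2.congr_fderiv ?_
  ext q <;> simp [osc, coordX_apply, Finset.mul_sum]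
  exact Finset.sum_congr rfl fun i _ => by ring

namespace RapidSymbol

variable {σ σ' τ : ℝ → EuclideanSpace ℝ (Fin n) → ℂ}

lemma add (hσ : RapidSymbol n σ) (hτ : RapidSymbol n τ) :
    RapidSymbol n (fun t ξ => σ t ξ + τ t ξ) := by
  refine ⟨fun t => (hσ.meas t).add (hτ.meas t), fun T N => ?_⟩
  obtain ⟨C, hC⟩ := hσ.decay T N
  obtain ⟨D, hD⟩ := hτ.decay T N
  refine ⟨C + D, fun t ht ξ => ?_⟩
  have := hC t ht ξ
  have := hD t ht ξ
  have h : (1 + ‖ξ‖) ^ N * ‖σ t ξ + τ t ξ‖ ≤ (1 + ‖ξ‖) ^ N * (‖σ t ξ‖ + ‖τ t ξ‖) := by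
    gcongr; exact norm_add_le _ _
  linarith

lemma const_mul (hσ : RapidSymbol n σ) {b : ℝ → ℂ} (hb : Continuous b) :
    RapidSymbol n (fun t ξ => b t * σ t ξ) := by
  refine ⟨fun t => (hσ.meas t).const_mul _, fun T N => ?_⟩
  obtain ⟨C, hC⟩ := hσ.decay T N
  obtain ⟨B, hB⟩ := (isCompact_Icc (a := -T) (b := T)).exists_bound_of_continuousOn hb.continuousOn
  refine ⟨B * C, fun t ht ξ => ?_⟩
  have h1 := hC t ht ξ
  have h2 := hB t (abs_le.1 ht)
  have h0 : 0 ≤ (1 + ‖ξ‖) ^ N * ‖σ t ξ‖ := by positivity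
  rw [norm_mul]
  calc (1 + ‖ξ‖) ^ N * (‖b t‖ * ‖σ t ξ‖) = ‖b t‖ * ((1 + ‖ξ‖) ^ N * ‖σ t ξ‖) := by ring
    _ ≤ B * C := mul_le_mul h2 h1 h0 ((norm_nonneg _).trans h2)

lemma mulX (hσ : RapidSymbol n σ) (i : Fin n) : RapidSymbol n (mulX n i σ) := by
  refine ⟨fun t => ?_, fun T N => ?_⟩
  · refine AEStronglyMeasurable.mul ?_ (hσ.meas t)
    exact Continuous.aestronglyMeasurable (by fun_prop)
  · obtain ⟨C, hC⟩ := hσ.decay T (N + 1)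
    refine ⟨2 * π * C, fun t ht ξ => ?_⟩
    have h1 := hC t ht ξ
    have h2 : |ξ i| ≤ ‖ξ‖ := by simpa using PiLp.norm_apply_le ξ i
    have h3 : ‖_root_.mulX n i σ t ξ‖ = 2 * π * |ξ i| * ‖σ t ξ‖ := by
      simp [_root_.mulX, abs_of_pos Real.pi_pos]
    rw [h3]
    calc (1 + ‖ξ‖) ^ N * (2 * π * |ξ i| * ‖σ t ξ‖)
        ≤ (1 + ‖ξ‖) ^ N * (2 * π * (1 + ‖ξ‖) * ‖σ t ξ‖) := by gcongr; linarith
      _ = 2 * π * ((1 + ‖ξ‖) ^ (N + 1) * ‖σ t ξ‖) := by ring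
      _ ≤ 2 * π * C := by gcongr

lemma bound (hσ : RapidSymbol n σ) (T : ℝ) :
    ∃ C, ∀ t, |t| ≤ T → ∀ ξ, ‖σ t ξ‖ ≤ C * (1 + ‖ξ‖) ^ (-((n : ℝ) + 1)) := by
  obtain ⟨C, hC⟩ := hσ.decay T (n + 1)
  refine ⟨C, fun t ht ξ => ?_⟩
  have h0 : 0 < 1 + ‖ξ‖ := by positivity
  rw [Real.rpow_neg h0.le, ← div_eq_mul_inv, le_div_iff₀ (by positivity)]
  have := hC t ht ξ
  have h1 : (1 + ‖ξ‖) ^ ((n : ℝ) + 1) = (1 + ‖ξ‖) ^ (n + 1) := by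
    rw [← Real.rpow_natCast]; push_cast; rfl
  rw [h1]; linarith

end RapidSymbol

lemma integrable_weight : Integrable (fun ξ : EuclideanSpace ℝ (Fin n) =>
    (1 + ‖ξ‖) ^ (-((n : ℝ) + 1))) := by
  apply integrable_one_add_norm
  simp

namespace RapidSymbol
variable {σ σ' τ : ℝ → EuclideanSpace ℝ (Fin n) → ℂ}

lemma osc_meas (hσ : RapidSymbol n σ) (p : ℝ × (Fin n → ℝ)) :
    AEStronglyMeasurable (fun ξ => osc n p.2 ξ * σ p.1 ξ) volume :=
  (osc_continuous p.2).aestronglyMeasurable.mul (hσ.meas p.1)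

lemma integrable (hσ : RapidSymbol n σ) (p : ℝ × (Fin n → ℝ)) :
    Integrable (fun ξ => osc n p.2 ξ * σ p.1 ξ) := by
  obtain ⟨C, hC⟩ := hσ.bound |p.1|
  refine (integrable_weight.const_mul C).mono' (hσ.osc_meas p) (ae_of_all _ fun ξ => ?_)
  rw [norm_mul, norm_osc, one_mul]
  exact hC _ le_rfl ξ

lemma integrable_smulRight (hτ : RapidSymbol n τ) (L : ℝ × (Fin n → ℝ) →L[ℝ] ℝ)
    (p : ℝ × (Fin n → ℝ)) : Integrable (fun ξ => L.smulRight (osc n p.2 ξ * τ p.1 ξ)) :=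
  (ContinuousLinearMap.smulRightL ℝ (ℝ × (Fin n → ℝ)) ℂ L).integrable_comp (hτ.integrable p)

lemma integral_smulRight (hτ : RapidSymbol n τ) (L : ℝ × (Fin n → ℝ) →L[ℝ] ℝ)
    (p : ℝ × (Fin n → ℝ)) :
    ∫ ξ, L.smulRight (osc n p.2 ξ * τ p.1 ξ) = L.smulRight (oscI n τ p) :=
  (ContinuousLinearMap.smulRightL ℝ (ℝ × (Fin n → ℝ)) ℂ L).integral_comp_comm (hτ.integrable p)

/-- Differentiation under the integral sign: `∂_t` acts on the symbol and `∂_{x_i}` multiplies it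
by `2πi ξ_i`. -/
lemma hasFDerivAt (hσ : RapidSymbol n σ) (hσ' : RapidSymbol n σ')
    (hd : ∀ t ξ, HasDerivAt (fun t => σ t ξ) (σ' t ξ) t) (p : ℝ × (Fin n → ℝ)) :
    HasFDerivAt (oscI n σ)
      ((ContinuousLinearMap.fst ℝ ℝ (Fin n → ℝ)).smulRight (oscI n σ' p) +
        ∑ i, (coordX n i).smulRight (oscI n (_root_.mulX n i σ) p)) p := by
  let F' : ℝ × (Fin n → ℝ) → EuclideanSpace ℝ (Fin n) → (ℝ × (Fin n → ℝ) →L[ℝ] ℂ) :=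
    fun p ξ => (ContinuousLinearMap.fst ℝ ℝ (Fin n → ℝ)).smulRight (osc n p.2 ξ * σ' p.1 ξ) +
        ∑ i, (coordX n i).smulRight (osc n p.2 ξ * _root_.mulX n i σ p.1 ξ)
  obtain ⟨hF'int, hF'val⟩ := integral_add_sum
    (hσ'.integrable_smulRight (ContinuousLinearMap.fst ℝ ℝ (Fin n → ℝ)) p)
    fun i => (hσ.mulX i).integrable_smulRight (coordX n i) p
  have hval : ∫ ξ, F' p ξ = (ContinuousLinearMap.fst ℝ ℝ (Fin n → ℝ)).smulRight (oscI n σ' p) +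
        ∑ i, (coordX n i).smulRight (oscI n (_root_.mulX n i σ) p) := by
    refine hF'val.trans ?_
    rw [hσ'.integral_smulRight]
    congr 1
    exact Finset.sum_congr rfl fun i _ => (hσ.mulX i).integral_smulRight _ p
  obtain ⟨C, hC⟩ := hσ'.bound (|p.1| + 1)
  choose D hD using fun i => (hσ.mulX i).bound (|p.1| + 1)
  refine HasFDerivAt.congr_fderiv (f' := ∫ ξ, F' p ξ) ?_ hval
  have main := hasFDerivAt_integral_of_dominated_of_fderiv_le (𝕜 := ℝ) (μ := volume) (x₀ := p)
    (s := Metric.ball p 1)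
    (F := fun p ξ => osc n p.2 ξ * σ p.1 ξ) (F' := F')
    (bound := fun ξ => ‖ContinuousLinearMap.fst ℝ ℝ (Fin n → ℝ)‖ *
      (C * (1 + ‖ξ‖) ^ (-((n : ℝ) + 1))) +
      ∑ i, ‖coordX n i‖ * (D i * (1 + ‖ξ‖) ^ (-((n : ℝ) + 1))))
    (Metric.ball_mem_nhds p one_pos)
    (Filter.Eventually.of_forall fun q => hσ.osc_meas q) (hσ.integrable p)
    hF'int.aestronglyMeasurable
  refine main (ae_of_all _ fun ξ q hq => ?_) ?_ (ae_of_all _ fun ξ q _ => ?_)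
  · have hq1 : |q.1| ≤ |p.1| + 1 := by
      have h1 : |q.1 - p.1| ≤ 1 := by
        have := (norm_fst_le (q - p)).trans (mem_ball_iff_norm.1 hq).le
        simpa using this
      have := abs_add_le p.1 (q.1 - p.1)
      rw [add_sub_cancel] at this
      linarith
    have b1 : ‖(ContinuousLinearMap.fst ℝ ℝ (Fin n → ℝ)).smulRight (osc n q.2 ξ * σ' q.1 ξ)‖ ≤
        ‖ContinuousLinearMap.fst ℝ ℝ (Fin n → ℝ)‖ * (C * (1 + ‖ξ‖) ^ (-((n : ℝ) + 1))) := by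
      rw [ContinuousLinearMap.norm_smulRight_apply, norm_mul, norm_osc, one_mul]
      exact mul_le_mul_of_nonneg_left (hC _ hq1 ξ) (norm_nonneg _)
    have b2 : ∀ i, ‖(coordX n i).smulRight (osc n q.2 ξ * _root_.mulX n i σ q.1 ξ)‖ ≤
        ‖coordX n i‖ * (D i * (1 + ‖ξ‖) ^ (-((n : ℝ) + 1))) := by
      intro i
      rw [ContinuousLinearMap.norm_smulRight_apply, norm_mul, norm_osc, one_mul]
      exact mul_le_mul_of_nonneg_left (hD i _ hq1 ξ) (norm_nonneg _)
    have b3 : ‖∑ i, (coordX n i).smulRight (osc n q.2 ξ * _root_.mulX n i σ q.1 ξ)‖ ≤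
        ∑ i, ‖coordX n i‖ * (D i * (1 + ‖ξ‖) ^ (-((n : ℝ) + 1))) :=
      (norm_sum_le _ _).trans (Finset.sum_le_sum fun i _ => b2 i)
    exact (norm_add_le _ _).trans (add_le_add b1 b3)
  · exact (integral_add_sum ((integrable_weight.const_mul C).const_mul _)
      fun i => (integrable_weight.const_mul (D i)).const_mul ‖coordX n i‖).1
  · have h1 := osc_hasFDerivAt ξ q
    have h2 : HasFDerivAt (fun q : ℝ × (Fin n → ℝ) => σ q.1 ξ)
        ((ContinuousLinearMap.fst ℝ ℝ (Fin n → ℝ)).smulRight (σ' q.1 ξ)) q := by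
      have := (hd q.1 ξ).hasFDerivAt.comp q (hasFDerivAt_fst (𝕜 := ℝ) (p := q))
      refine this.congr_fderiv ?_
      ext v <;> simp
    refine (h1.mul h2).congr_fderiv ?_
    ext v <;> simp [F', _root_.mulX, Finset.mul_sum] <;>
      exact Finset.sum_congr rfl fun i _ => by ring

end RapidSymbol

end

/-! ### Smoothness of Fourier-side solutions -/

/-- A pair `(σ, ∂_t σ)` of rapidly decaying symbols solving, for every frequency, the Fourier
transform of the linear equation `∂_t² v + c ∂_t v = e^{-t} Δ v`. -/
structure WaveSymbol (n : ℕ) (c : ℝ) (σ σ' : ℝ → EuclideanSpace ℝ (Fin n) → ℂ) : Prop where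
  rapid : RapidSymbol n σ
  rapid' : RapidSymbol n σ'
  deriv₁ : ∀ t ξ, HasDerivAt (fun t => σ t ξ) (σ' t ξ) t
  deriv₂ : ∀ t ξ, HasDerivAt (fun t => σ' t ξ)
    (-c * σ' t ξ + Real.exp (-t) * ∑ i, mulX n i (mulX n i σ) t ξ) t

section
variable {n : ℕ} {c : ℝ} {σ σ' τ : ℝ → EuclideanSpace ℝ (Fin n) → ℂ}

namespace RapidSymbol

lemma sum {ι : Type*} (s : Finset ι) {f : ι → ℝ → EuclideanSpace ℝ (Fin n) → ℂ}
    (hf : ∀ i, RapidSymbol n (f i)) : RapidSymbol n (fun t ξ => ∑ i ∈ s, f i t ξ) := by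
  classical
  induction s using Finset.induction_on with
  | empty =>
    refine ⟨fun t => ?_, fun T N => ⟨0, ?_⟩⟩
    · simpa using aestronglyMeasurable_const
    · simp
  | insert a s ha ih =>
    simp only [Finset.sum_insert ha]
    exact (hf a).add ih

end RapidSymbol

namespace WaveSymbol

lemma mulX (h : WaveSymbol n c σ σ') (i : Fin n) :
    WaveSymbol n c (mulX n i σ) (mulX n i σ') := by
  refine ⟨h.rapid.mulX i, h.rapid'.mulX i, fun t ξ => (h.deriv₁ t ξ).const_mul _, fun t ξ => ?_⟩
  refine ((h.deriv₂ t ξ).const_mul _).congr_deriv ?_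
  simp only [_root_.mulX, mul_add, Finset.mul_sum]
  congr 1
  · ring
  · exact Finset.sum_congr rfl fun j _ => by ring

/-- The second time derivative of the symbol. -/
noncomputable def acc (n : ℕ) (c : ℝ) (σ σ' : ℝ → EuclideanSpace ℝ (Fin n) → ℂ) :
    ℝ → EuclideanSpace ℝ (Fin n) → ℂ :=
  fun t ξ => -c * σ' t ξ + Real.exp (-t) * ∑ i, _root_.mulX n i (_root_.mulX n i σ) t ξ

lemma rapid_acc (h : WaveSymbol n c σ σ') : RapidSymbol n (acc n c σ σ') := by
  refine RapidSymbol.add ?_ ?_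
  · exact h.rapid'.const_mul (b := fun _ => -(c : ℂ)) continuous_const
  · refine RapidSymbol.const_mul (b := fun t => (Real.exp (-t) : ℂ)) ?_ (by fun_prop)
    exact RapidSymbol.sum _ fun i => (h.rapid.mulX i).mulX i

lemma oscI_acc (h : WaveSymbol n c σ σ') (p : ℝ × (Fin n → ℝ)) :
    oscI n (acc n c σ σ') p = -c * oscI n σ' p +
      Real.exp (-p.1) * ∑ i, oscI n (_root_.mulX n i (_root_.mulX n i σ)) p := by
  have h1 := (h.rapid'.integrable p).const_mul (-(c : ℂ))
  have h2 := fun i => ((h.rapid.mulX i).mulX i).integrable p |>.const_mul (Real.exp (-p.1) : ℂ)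
  have h3 := (integral_add_sum h1 h2).2
  simp only [integral_const_mul] at h3
  unfold oscI
  rw [Finset.mul_sum, ← h3]
  refine integral_congr_ae (ae_of_all _ fun ξ => ?_)
  simp only [acc, mul_add, Finset.mul_sum]
  congr 1
  · ring
  · exact Finset.sum_congr rfl fun i _ => by ring

lemma hasFDerivAt₁ (h : WaveSymbol n c σ σ') (p : ℝ × (Fin n → ℝ)) :
    HasFDerivAt (oscI n σ)
      ((ContinuousLinearMap.fst ℝ ℝ (Fin n → ℝ)).smulRight (oscI n σ' p) +
        ∑ i, (coordX n i).smulRight (oscI n (_root_.mulX n i σ) p)) p :=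
  h.rapid.hasFDerivAt h.rapid' h.deriv₁ p

lemma hasFDerivAt₂ (h : WaveSymbol n c σ σ') (p : ℝ × (Fin n → ℝ)) :
    HasFDerivAt (oscI n σ')
      ((ContinuousLinearMap.fst ℝ ℝ (Fin n → ℝ)).smulRight (-c * oscI n σ' p +
      Real.exp (-p.1) * ∑ i, oscI n (_root_.mulX n i (_root_.mulX n i σ)) p) +
        ∑ i, (coordX n i).smulRight (oscI n (_root_.mulX n i σ') p)) p := by
  rw [← h.oscI_acc p]
  exact h.rapid'.hasFDerivAt h.rapid_acc h.deriv₂ p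

lemma contDiff_smulRight {k : ℕ} {F : ℝ × (Fin n → ℝ) → ℂ} (L : ℝ × (Fin n → ℝ) →L[ℝ] ℝ)
    (hF : ContDiff ℝ k F) : ContDiff ℝ k (fun p => L.smulRight (F p)) :=
  (ContinuousLinearMap.smulRightL ℝ (ℝ × (Fin n → ℝ)) ℂ L).contDiff.comp hF

/-- Differentiating an oscillatory integral with a wave symbol produces oscillatory integrals of the
same kind, so smoothness follows by induction on the order. -/
lemma contDiff_nat (k : ℕ) : ∀ {σ σ' : ℝ → EuclideanSpace ℝ (Fin n) → ℂ}, WaveSymbol n c σ σ' →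
    ContDiff ℝ k (oscI n σ) ∧ ContDiff ℝ k (oscI n σ') := by
  induction k with
  | zero =>
    intro σ σ' h
    simp only [Nat.cast_zero, contDiff_zero]
    exact ⟨continuous_iff_continuousAt.2 fun p => (h.hasFDerivAt₁ p).continuousAt,
      continuous_iff_continuousAt.2 fun p => (h.hasFDerivAt₂ p).continuousAt⟩
  | succ k ih =>
    intro σ σ' h
    have hk : ((k + 1 : ℕ) : WithTop ℕ∞) = (k : WithTop ℕ∞) + 1 := by push_cast; rfl
    rw [hk, contDiff_succ_iff_hasFDerivAt, contDiff_succ_iff_hasFDerivAt]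
    refine ⟨⟨_, ?_, h.hasFDerivAt₁⟩, ⟨_, ?_, h.hasFDerivAt₂⟩⟩
    · exact (contDiff_smulRight _ (ih h).2).add
        (ContDiff.sum fun i _ => contDiff_smulRight _ (ih (h.mulX i)).1)
    · refine (contDiff_smulRight _ ?_).add
        (ContDiff.sum fun i _ => contDiff_smulRight _ (ih (h.mulX i)).2)
      refine (contDiff_const.mul (ih h).2).add (ContDiff.mul ?_ ?_)
      · exact Complex.ofRealCLM.contDiff.comp (Real.contDiff_exp.comp contDiff_fst.neg)
      · exact ContDiff.sum fun i _ => (ih ((h.mulX i).mulX i)).1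

lemma contDiff (h : WaveSymbol n c σ σ') : ContDiff ℝ (⊤ : ℕ∞) (oscI n σ) :=
  contDiff_infty.2 fun k => (contDiff_nat k h).1

end WaveSymbol
end

/-! ### The linear solution operator -/

section
variable {n : ℕ}

/-- A symbol of the form (function of at most linear growth) × (Schwartz function). -/
lemma rapidSymbol_mul_schwartz {a : ℝ → EuclideanSpace ℝ (Fin n) → ℝ}
    (ha : ∀ t, Measurable (a t))
    (hb : ∀ T, ∃ K, ∀ t, |t| ≤ T → ∀ ξ, |a t ξ| ≤ K * (1 + ‖ξ‖))
    (U : SchwartzMap (EuclideanSpace ℝ (Fin n)) ℂ) :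
    RapidSymbol n (fun t ξ => (a t ξ : ℂ) * U ξ) := by
  refine ⟨fun t => ?_, fun T N => ?_⟩
  · exact (Complex.measurable_ofReal.comp (ha t)).aestronglyMeasurable.mul
      U.continuous.aestronglyMeasurable
  · obtain ⟨K, hK⟩ := hb T
    have hU := fun ξ => SchwartzMap.one_add_le_sup_seminorm_apply (𝕜 := ℝ) (m := (N + 1, 0))
      le_rfl le_rfl U ξ
    simp only [norm_iteratedFDeriv_zero] at hU
    obtain ⟨M, hM⟩ : ∃ M : ℝ, ∀ ξ, (1 + ‖ξ‖) ^ (N + 1) * ‖U ξ‖ ≤ M := ⟨_, hU⟩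
    refine ⟨|K| * M, fun t ht ξ => ?_⟩
    · have h1 := hK t ht ξ
      have h2 : K * (1 + ‖ξ‖) ≤ |K| * (1 + ‖ξ‖) := by gcongr; exact le_abs_self K
      rw [norm_mul, Complex.norm_real, Real.norm_eq_abs]
      calc (1 + ‖ξ‖) ^ N * (|a t ξ| * ‖U ξ‖)
          ≤ (1 + ‖ξ‖) ^ N * ((|K| * (1 + ‖ξ‖)) * ‖U ξ‖) := by gcongr; exact h1.trans h2
        _ = |K| * ((1 + ‖ξ‖) ^ (N + 1) * ‖U ξ‖) := by ring
        _ ≤ |K| * M := by gcongr; exact hM ξ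

/-- The solution operator of the linear equation on the Fourier side, with its bound uniform in
`t ≥ 0`. -/
theorem exists_waveSymbol {c : ℝ} (hc : 1 ≤ c)
    (U0 U1 : SchwartzMap (EuclideanSpace ℝ (Fin n)) ℂ) :
    ∃ σ σ' : ℝ → EuclideanSpace ℝ (Fin n) → ℂ, WaveSymbol n c σ σ' ∧
      (∀ ξ, σ 0 ξ = U0 ξ) ∧ (∀ ξ, σ' 0 ξ = U1 ξ) ∧
      ∀ t, 0 ≤ t → ∀ ξ, ‖σ t ξ‖ ≤ ‖U0 ξ‖ + 4 * π * (‖ξ‖ * ‖U0 ξ‖) + 2 * ‖U1 ξ‖ := by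
  -- `A` and `B` are the fundamental solutions of the mode equation with `s = |2πξ|²`.
  obtain ⟨A, hAm, hA0, hA⟩ := ode_exists c (1, 0)
  obtain ⟨B, hBm, hB0, hB⟩ := ode_exists c (0, 1)
  let s : EuclideanSpace ℝ (Fin n) → ℝ := fun ξ => (2 * π * ‖ξ‖) ^ 2
  have hs : ∀ ξ, 0 ≤ s ξ := fun ξ => sq_nonneg _
  have hsm : Measurable s := by fun_prop
  have hAE : ∀ ξ, √(modeE (s ξ) (A (s ξ)) 0) = 2 * π * ‖ξ‖ := by
    intro ξ
    simp only [modeE, hA0, s]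
    rw [show (0 : ℝ) ^ 2 + Real.exp (-0) * (2 * π * ‖ξ‖) ^ 2 * 1 ^ 2 = (2 * π * ‖ξ‖) ^ 2 by simp]
    exact Real.sqrt_sq (by positivity)
  have hBE : ∀ ξ, √(modeE (s ξ) (B (s ξ)) 0) = 1 := by
    intro ξ; simp [modeE, hB0]
  have hg : ∀ K L : ℝ, 0 ≤ K → 0 ≤ L → ∀ ξ : EuclideanSpace ℝ (Fin n),
      K + L * ‖ξ‖ ≤ (K + L) * (1 + ‖ξ‖) := by
    intro K L hK hL ξ
    nlinarith [norm_nonneg ξ, mul_nonneg hK (norm_nonneg ξ)]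
  have rA1 := fun U => rapidSymbol_mul_schwartz (n := n) (a := fun t ξ => (A (s ξ) t).1)
    (fun t => ((hAm t).comp hsm).fst) (fun T => ⟨1 + |T| * (Real.exp (c * T) * (2 * π)), fun t ht ξ => by
      have h := mode_bound_fst hc (hs ξ) (hA (s ξ)) T t ht
      rw [hAE, hA0, abs_of_nonneg ((abs_nonneg t).trans ht)] at *
      simp only [abs_one] at h
      refine le_trans (le_trans h (le_of_eq ?_)) (hg 1 _ zero_le_one ?_ ξ)
      · ring
      · have := (abs_nonneg t).trans ht
        positivity⟩) U
  have rA2 := fun U => rapidSymbol_mul_schwartz (n := n) (a := fun t ξ => (A (s ξ) t).2)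
    (fun t => ((hAm t).comp hsm).snd) (fun T => ⟨0 + (Real.exp (c * T) * (2 * π)), fun t ht ξ => by
      have h := mode_bound_snd hc (hs ξ) (hA (s ξ)) T t ht
      rw [hAE] at h
      refine le_trans (le_trans h (le_of_eq ?_)) (hg 0 _ le_rfl ?_ ξ)
      · ring
      · positivity⟩) U
  have rB1 := fun U => rapidSymbol_mul_schwartz (n := n) (a := fun t ξ => (B (s ξ) t).1)
    (fun t => ((hBm t).comp hsm).fst) (fun T => ⟨T * Real.exp (c * T) + 0, fun t ht ξ => by
      have h := mode_bound_fst hc (hs ξ) (hB (s ξ)) T t ht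
      have hT := (abs_nonneg t).trans ht
      rw [hBE, hB0] at h
      simp only [abs_zero] at h
      refine le_trans (le_trans h (le_of_eq ?_)) (hg _ 0 ?_ le_rfl ξ)
      · ring
      · positivity⟩) U
  have rB2 := fun U => rapidSymbol_mul_schwartz (n := n) (a := fun t ξ => (B (s ξ) t).2)
    (fun t => ((hBm t).comp hsm).snd) (fun T => ⟨Real.exp (c * T) + 0, fun t ht ξ => by
      have h := mode_bound_snd hc (hs ξ) (hB (s ξ)) T t ht
      rw [hBE] at h
      refine le_trans (le_trans h (le_of_eq ?_)) (hg _ 0 ?_ le_rfl ξ)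
      · ring
      · positivity⟩) U
  have hss : ∀ ξ : EuclideanSpace ℝ (Fin n), (s ξ : ℂ) = ∑ i, (2 * π * (ξ i : ℂ)) ^ 2 := by
    intro ξ
    simp only [s, mul_pow, EuclideanSpace.norm_sq_eq, Finset.mul_sum, Real.norm_eq_abs, sq_abs]
    push_cast
    rfl
  refine ⟨fun t ξ => (A (s ξ) t).1 * U0 ξ + (B (s ξ) t).1 * U1 ξ,
    fun t ξ => (A (s ξ) t).2 * U0 ξ + (B (s ξ) t).2 * U1 ξ,
    ⟨(rA1 U0).add (rB1 U1), (rA2 U0).add (rB2 U1), fun t ξ => ?_, fun t ξ => ?_⟩,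
    fun ξ => by simp [hA0, hB0], fun ξ => by simp [hA0, hB0], fun t ht ξ => ?_⟩
  · exact ((mode_fst (hA (s ξ)) t).ofReal_comp.mul_const _).add
      ((mode_fst (hB (s ξ)) t).ofReal_comp.mul_const _)
  · refine (((mode_snd (hA (s ξ)) t).ofReal_comp.mul_const (U0 ξ)).add
      ((mode_snd (hB (s ξ)) t).ofReal_comp.mul_const (U1 ξ))).congr_deriv ?_
    push_cast
    have hX : ∀ z : ℂ, ∑ i, (2 * π * Complex.I * (ξ i : ℂ)) * ((2 * π * Complex.I * (ξ i : ℂ)) * z)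
        = -(s ξ : ℂ) * z := by
      intro z
      rw [hss, ← Finset.sum_neg_distrib, Finset.sum_mul]
      refine Finset.sum_congr rfl fun i _ => ?_
      linear_combination (2 * π * (ξ i : ℂ)) ^ 2 * z * Complex.I_sq
    simp only [mulX, hX]
    ring
  · have h1 := mode_bound_pos hc (hs ξ) (hA (s ξ)) t ht
    have h2 := mode_bound_pos hc (hs ξ) (hB (s ξ)) t ht
    rw [hAE, hA0] at h1
    rw [hBE, hB0] at h2
    simp only [abs_one, abs_zero] at h1 h2
    refine (norm_add_le _ _).trans ?_
    rw [norm_mul, norm_mul, Complex.norm_real, Complex.norm_real, Real.norm_eq_abs,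
      Real.norm_eq_abs]
    have h3 := mul_le_mul_of_nonneg_right h1 (norm_nonneg (U0 ξ))
    have h4 := mul_le_mul_of_nonneg_right h2 (norm_nonneg (U1 ξ))
    nlinarith

/-- The quantity controlling the solution with initial data `𝓕⁻ U0, 𝓕⁻ U1` uniformly in `t ≥ 0`. -/
noncomputable def specBound (U0 U1 : SchwartzMap (EuclideanSpace ℝ (Fin n)) ℂ) : ℝ :=
  (∫ ξ, ‖U0 ξ‖) + 4 * π * (∫ ξ, ‖ξ‖ * ‖U0 ξ‖) + 2 * ∫ ξ, ‖U1 ξ‖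

lemma norm_oscI_le {σ : ℝ → EuclideanSpace ℝ (Fin n) → ℂ}
    (U0 U1 : SchwartzMap (EuclideanSpace ℝ (Fin n)) ℂ)
    (h : ∀ t, 0 ≤ t → ∀ ξ, ‖σ t ξ‖ ≤ ‖U0 ξ‖ + 4 * π * (‖ξ‖ * ‖U0 ξ‖) + 2 * ‖U1 ξ‖)
    (p : ℝ × (Fin n → ℝ)) (hp : 0 ≤ p.1) : ‖oscI n σ p‖ ≤ specBound U0 U1 := by
  have i0 : Integrable (fun ξ => ‖U0 ξ‖) := U0.integrable.norm
  have i2 : Integrable (fun ξ => ‖U1 ξ‖) := U1.integrable.norm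
  have i1 : Integrable (fun ξ => ‖ξ‖ * ‖U0 ξ‖) := by
    simpa using U0.integrable_pow_mul (volume) 1
  refine (norm_integral_le_of_norm_le (g := fun ξ => ‖U0 ξ‖ + 4 * π * (‖ξ‖ * ‖U0 ξ‖) + 2 * ‖U1 ξ‖)
    ((i0.add (i1.const_mul (4 * π))).add (i2.const_mul 2)) (ae_of_all _ fun ξ => ?_)).trans
    (le_of_eq ?_)
  · rw [norm_mul, norm_osc, one_mul]
    exact h _ hp ξ
  · have e1 := integral_add (i0.add (i1.const_mul (4 * π))) (i2.const_mul 2)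
    have e2 := integral_add i0 (i1.const_mul (4 * π))
    simp only [integral_const_mul, Pi.add_apply] at e1 e2
    rw [e1, e2, specBound]

open scoped FourierTransform in
lemma oscI_initial {σ : ℝ → EuclideanSpace ℝ (Fin n) → ℂ}
    (u : SchwartzMap (EuclideanSpace ℝ (Fin n)) ℂ) (h : ∀ ξ, σ 0 ξ = (𝓕 u) ξ) (x : Fin n → ℝ) :
    oscI n σ (0, x) = u (WithLp.toLp 2 x) := by
  have h1 : (𝓕⁻ (𝓕 u)) (WithLp.toLp 2 x) = u (WithLp.toLp 2 x) := by simp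
  rw [← h1, SchwartzMap.fourierInv_coe, Real.fourierInv_eq']
  unfold oscI
  refine integral_congr_ae (ae_of_all _ fun ξ => ?_)
  simp only [osc, h, smul_eq_mul]
  congr 2
  simp [PiLp.inner_apply]
  ring
end

/-! ### Small data in the Schwartz space -/

section
variable {n : ℕ}

/-- Space derivatives of a jointly smooth family depend smoothly on the parameter as well. -/
lemma contDiff_iteratedFDeriv_param {V F : Type*} [NormedAddCommGroup V] [NormedSpace ℝ V]
    [NormedAddCommGroup F] [NormedSpace ℝ F] {G : ℝ × V → F} (hG : ContDiff ℝ (⊤ : ℕ∞) G) (l : ℕ) :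
    ContDiff ℝ (⊤ : ℕ∞) (fun q : ℝ × V => iteratedFDeriv ℝ l (fun y => G (q.1, y)) q.2) := by
  induction l with
  | zero =>
    simp only [iteratedFDeriv_zero_eq_comp, Function.comp_def]
    exact (continuousMultilinearCurryFin0 ℝ V F).symm.contDiff.comp hG
  | succ l ih =>
    simp only [iteratedFDeriv_succ_eq_comp_left, Function.comp_def]
    have he : ContDiff ℝ (⊤ : ℕ∞)
        ⇑(continuousMultilinearCurryLeftEquiv ℝ (fun _ : Fin (l + 1) => V) F).symm :=
      LinearIsometryEquiv.contDiff (𝕜 := ℝ) (E := V →L[ℝ] ContinuousMultilinearMap ℝ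
        (fun _ : Fin l => V) F) (F := ContinuousMultilinearMap ℝ (fun _ : Fin (l + 1) => V) F)
        (continuousMultilinearCurryLeftEquiv ℝ (fun _ : Fin (l + 1) => V) F).symm
    refine he.comp ?_
    refine ContDiff.fderiv (n := (⊤ : ℕ∞)) (m := (⊤ : ℕ∞)) (f := fun (q : ℝ × V) (y : V) =>
      iteratedFDeriv ℝ l (fun y => G (q.1, y)) y) ?_ contDiff_snd (by simp)
    exact ih.comp ((contDiff_fst.comp contDiff_fst).prodMk contDiff_snd)

/-- A smooth family of functions supported in a fixed compact set and vanishing at `ε = 0` tends to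
zero in the Schwartz space. -/
theorem schwartz_family {V : Type*} [NormedAddCommGroup V] [NormedSpace ℝ V]
    {G : ℝ × V → ℂ} (hG : ContDiff ℝ (⊤ : ℕ∞) G) {K : Set V} (hK : IsCompact K)
    (hGK : ∀ ε, ∀ x ∉ K, G (ε, x) = 0) (hG0 : ∀ x, G (0, x) = 0) :
    ∃ u : ℝ → SchwartzMap V ℂ, (∀ ε x, u ε x = G (ε, x)) ∧
      Filter.Tendsto u (nhds 0) (nhds 0) := by
  have hc : ∀ ε, HasCompactSupport (fun x => G (ε, x)) := fun ε =>
    HasCompactSupport.intro hK fun x hx => hGK ε x hx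
  have hd : ∀ ε, ContDiff ℝ (⊤ : ℕ∞) (fun x => G (ε, x)) := fun ε =>
    hG.comp (contDiff_const.prodMk contDiff_id)
  refine ⟨fun ε => (hc ε).toSchwartzMap (hd ε), fun ε x => rfl, ?_⟩
  rw [(schwartz_withSeminorms ℝ V ℂ).tendsto_nhds]
  rintro ⟨k, l⟩ r hr
  have hcont := (contDiff_iteratedFDeriv_param hG l).continuous
  have hev : ∀ᶠ ε in nhds (0 : ℝ), ∀ x ∈ K,
      ‖x‖ ^ k * ‖iteratedFDeriv ℝ l (fun y => G (ε, y)) x‖ < r / 2 := by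
    refine hK.eventually_forall_of_forall_eventually fun x _ => ?_
    have hcont2 : Continuous (fun q : ℝ × V =>
        ‖q.2‖ ^ k * ‖iteratedFDeriv ℝ l (fun y => G (q.1, y)) q.2‖) :=
      (continuous_snd.norm.pow k).mul hcont.norm
    refine hcont2.continuousAt.eventually_lt continuousAt_const ?_
    have : (fun y => G ((0 : ℝ), y)) = 0 := funext hG0
    simp only [this, iteratedFDeriv_zero]
    simp [hr]
  filter_upwards [hev] with ε hε
  rw [sub_zero]
  refine lt_of_le_of_lt (SchwartzMap.seminorm_le_bound ℝ k l _ (M := r / 2) (by positivity)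
    fun x => ?_) (by linarith)
  change ‖x‖ ^ k * ‖iteratedFDeriv ℝ l (fun y => G (ε, y)) x‖ ≤ r / 2
  by_cases hx : x ∈ K
  · exact (hε x hx).le
  · have : iteratedFDeriv ℝ l (fun y => G (ε, y)) x = 0 := by
      by_contra h
      have h1 := support_iteratedFDeriv_subset (𝕜 := ℝ) l (Function.mem_support.2 h)
      have h2 : tsupport (fun y => G (ε, y)) ⊆ K := by
        refine closure_minimal (fun y hy => ?_) hK.isClosed
        by_contra hyK
        exact hy (hGK ε y hyK)
      exact hx (h2 h1)
    rw [this]; simp; positivity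

open scoped FourierTransform in
/-- The Fourier transform is continuous on the Schwartz space, and weighted `L¹` norms are controlled
by Schwartz seminorms. -/
theorem specBound_tendsto {u0 u1 : ℝ → SchwartzMap (EuclideanSpace ℝ (Fin n)) ℂ}
    (h0 : Filter.Tendsto u0 (nhds 0) (nhds 0)) (h1 : Filter.Tendsto u1 (nhds 0) (nhds 0)) :
    Filter.Tendsto (fun ε => specBound (𝓕 (u0 ε)) (𝓕 (u1 ε))) (nhds 0) (nhds 0) := by
  have key : ∀ (u : ℝ → SchwartzMap (EuclideanSpace ℝ (Fin n)) ℂ),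
      Filter.Tendsto u (nhds 0) (nhds 0) → ∀ k : ℕ,
      Filter.Tendsto (fun ε => ∫ ξ, ‖ξ‖ ^ k * ‖(𝓕 (u ε)) ξ‖) (nhds 0) (nhds 0) := by
    intro u hu k
    have hF : Filter.Tendsto (fun ε => 𝓕 (u ε)) (nhds 0) (nhds 0) := by
      have hcont : Continuous (fun v : SchwartzMap (EuclideanSpace ℝ (Fin n)) ℂ => 𝓕 v) :=
        (FourierTransform.fourierCLE ℝ (SchwartzMap (EuclideanSpace ℝ (Fin n)) ℂ)).continuous
      have := (hcont.tendsto 0).comp hu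
      rwa [FourierTransform.fourier_zero] at this
    have hS : ∀ m : ℕ × ℕ, Filter.Tendsto (fun ε => SchwartzMap.seminorm ℝ m.1 m.2 (𝓕 (u ε)))
        (nhds 0) (nhds 0) := by
      intro m
      have := (((schwartz_withSeminorms ℝ (EuclideanSpace ℝ (Fin n)) ℂ).continuous_seminorm
        m).tendsto 0).comp hF
      rw [map_zero] at this
      exact this
    have hb := fun ε => SchwartzMap.integral_pow_mul_iteratedFDeriv_le ℝ
      (volume : Measure (EuclideanSpace ℝ (Fin n))) (𝓕 (u ε)) k 0
    simp only [norm_iteratedFDeriv_zero] at hb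
    refine squeeze_zero (fun ε => integral_nonneg fun ξ => by positivity) hb ?_
    have := (((hS (0, 0)).add (hS (k + (volume : Measure (EuclideanSpace ℝ (Fin n))).integrablePower, 0))).const_mul
      (2 ^ (volume : Measure (EuclideanSpace ℝ (Fin n))).integrablePower * ∫ x, (1 + ‖x‖) ^ (-((volume : Measure (EuclideanSpace ℝ (Fin n))).integrablePower : ℝ)) ∂(volume : Measure (EuclideanSpace ℝ (Fin n)))))
    simpa using this
  have a := key u0 h0 0
  have b := key u0 h0 1
  have d := key u1 h1 0
  simp only [pow_zero, one_mul, pow_one] at a b d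
  have := (a.add (b.const_mul (4 * π))).add (d.const_mul 2)
  simpa [specBound] using this
end

/-! ### Directional derivatives and the chain rule for the wave operator -/

section
variable {n : ℕ}

/-- Derivative of a space-time function in a fixed direction. -/
noncomputable def dir (n : ℕ) (e : ℝ × (Fin n → ℝ)) (φ : ℝ × (Fin n → ℝ) → ℝ) :
    ℝ × (Fin n → ℝ) → ℝ := fun p => fderiv ℝ φ p e

/-- The unit vector in the time direction. -/
def eT (n : ℕ) : ℝ × (Fin n → ℝ) := (1, 0)

/-- The unit vector in the `i`-th spatial direction. -/
def eX (n : ℕ) (i : Fin n) : ℝ × (Fin n → ℝ) := (0, Pi.single i 1)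

lemma hasDerivAt_time {φ : ℝ × (Fin n → ℝ) → ℝ} {L : ℝ × (Fin n → ℝ) →L[ℝ] ℝ} {t : ℝ}
    {x : Fin n → ℝ} (h : HasFDerivAt φ L (t, x)) : HasDerivAt (fun s => φ (s, x)) (L (eT n)) t :=
  h.comp_hasDerivAt t ((hasDerivAt_id t).prodMk (hasDerivAt_const t x))

lemma hasDerivAt_space {φ : ℝ × (Fin n → ℝ) → ℝ} {L : ℝ × (Fin n → ℝ) →L[ℝ] ℝ} {t : ℝ}
    {x : Fin n → ℝ} (i : Fin n) (h : HasFDerivAt φ L (t, x)) :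
    HasDerivAt (fun s => φ (t, Function.update x i s)) (L (eX n i)) (x i) := by
  have h2 : HasFDerivAt φ L (t, Function.update x i (x i)) := by simpa using h
  exact h2.comp_hasDerivAt (x i) ((hasDerivAt_const (x i) t).prodMk (hasDerivAt_update x i (x i)))

lemma pT_eq_of_hasFDerivAt {φ : ℝ × (Fin n → ℝ) → ℝ} {L : ℝ × (Fin n → ℝ) →L[ℝ] ℝ}
    {p : ℝ × (Fin n → ℝ)} (h : HasFDerivAt φ L p) : pT n φ p = L (eT n) :=
  (hasDerivAt_time h).deriv

lemma pX_eq_of_hasFDerivAt {φ : ℝ × (Fin n → ℝ) → ℝ} {L : ℝ × (Fin n → ℝ) →L[ℝ] ℝ}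
    {p : ℝ × (Fin n → ℝ)} (i : Fin n) (h : HasFDerivAt φ L p) : pX n i φ p = L (eX n i) :=
  (hasDerivAt_space i h).deriv

lemma pT_eq_dir {φ : ℝ × (Fin n → ℝ) → ℝ} (h : ContDiff ℝ (⊤ : ℕ∞) φ) :
    pT n φ = dir n (eT n) φ :=
  funext fun p => pT_eq_of_hasFDerivAt (h.differentiable (by simp) p).hasFDerivAt

lemma pX_eq_dir {φ : ℝ × (Fin n → ℝ) → ℝ} (h : ContDiff ℝ (⊤ : ℕ∞) φ) (i : Fin n) :
    pX n i φ = dir n (eX n i) φ :=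
  funext fun p => pX_eq_of_hasFDerivAt i (h.differentiable (by simp) p).hasFDerivAt

lemma contDiff_dir {φ : ℝ × (Fin n → ℝ) → ℝ} (h : ContDiff ℝ (⊤ : ℕ∞) φ)
    (e : ℝ × (Fin n → ℝ)) : ContDiff ℝ (⊤ : ℕ∞) (dir n e φ) :=
  (h.fderiv_right (by simp)).clm_apply contDiff_const

lemma dir_comm {φ : ℝ × (Fin n → ℝ) → ℝ} (h : ContDiff ℝ (⊤ : ℕ∞) φ)
    (e e' : ℝ × (Fin n → ℝ)) (p) : dir n e (dir n e' φ) p = dir n e' (dir n e φ) p := by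
  have hs : IsSymmSndFDerivAt ℝ φ p := h.contDiffAt.isSymmSndFDerivAt (by simpa using ENat.LEInfty.out)
  have hd : DifferentiableAt ℝ (fderiv ℝ φ) p :=
    (h.fderiv_right (m := (⊤ : ℕ∞)) (by simp)).differentiable (by simp) p
  have hk : ∀ e e', dir n e (dir n e' φ) p = fderiv ℝ (fderiv ℝ φ) p e e' := by
    intro e e'
    have : HasFDerivAt (dir n e' φ) _ p := hd.hasFDerivAt.clm_apply (hasFDerivAt_const e' p)
    rw [dir, this.fderiv]; simp
  rw [hk, hk, hs]

lemma dir_mul {φ ψ : ℝ × (Fin n → ℝ) → ℝ} (h : ContDiff ℝ (⊤ : ℕ∞) φ)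
    (h' : ContDiff ℝ (⊤ : ℕ∞) ψ) (e p) :
    dir n e (fun p => φ p * ψ p) p = dir n e φ p * ψ p + φ p * dir n e ψ p := by
  have := (h.differentiable (by simp) p).hasFDerivAt.mul (h'.differentiable (by simp) p).hasFDerivAt
  have h2 : HasFDerivAt (fun p => φ p * ψ p) _ p := this
  rw [dir, h2.fderiv]; simp [dir]; ring

lemma dir_comp {φ : ℝ × (Fin n → ℝ) → ℝ} {F : ℝ → ℝ} (h : ContDiff ℝ (⊤ : ℕ∞) φ)
    (hF : ContDiff ℝ (⊤ : ℕ∞) F) (e p) :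
    dir n e (fun p => F (φ p)) p = deriv F (φ p) * dir n e φ p := by
  have := (hF.differentiable (by simp) (φ p)).hasDerivAt.comp_hasFDerivAt p
    (h.differentiable (by simp) p).hasFDerivAt
  have h2 : HasFDerivAt (fun p => F (φ p)) _ p := this
  rw [dir, h2.fderiv]; simp [dir]

lemma dir_dir_comp {φ : ℝ × (Fin n → ℝ) → ℝ} {F : ℝ → ℝ} (h : ContDiff ℝ (⊤ : ℕ∞) φ)
    (hF : ContDiff ℝ (⊤ : ℕ∞) F) (e p) :
    dir n e (dir n e (fun p => F (φ p))) p =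
      deriv (deriv F) (φ p) * dir n e φ p ^ 2 + deriv F (φ p) * dir n e (dir n e φ) p := by
  have hF' : ContDiff ℝ (⊤ : ℕ∞) (deriv F) := (contDiff_infty_iff_deriv.1 hF).2
  have : dir n e (fun p => F (φ p)) = fun p => deriv F (φ p) * dir n e φ p :=
    funext fun p => dir_comp h hF e p
  have h1 : ContDiff ℝ (⊤ : ℕ∞) (fun p => deriv F (φ p)) := hF'.comp h
  rw [this, dir_mul h1 (contDiff_dir h e), dir_comp h hF']
  ring

lemma dBox_sub_eq {φ : ℝ × (Fin n → ℝ) → ℝ} (h : ContDiff ℝ (⊤ : ℕ∞) φ) (p) :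
    dBox n φ p - pT n φ p = -dir n (eT n) (dir n (eT n) φ) p
      - ((n : ℝ) / 2 + 1) * dir n (eT n) φ p
      + Real.exp (-p.1) * ∑ i, dir n (eX n i) (dir n (eX n i) φ) p := by
  simp only [dBox, pT_eq_dir h, pT_eq_dir (contDiff_dir h _), pX_eq_dir h,
    pX_eq_dir (contDiff_dir h _)]
  ring

lemma nullQ_eq {φ : ℝ × (Fin n → ℝ) → ℝ} (h : ContDiff ℝ (⊤ : ℕ∞) φ) (p) :
    nullQ n φ φ p = -dir n (eT n) φ p ^ 2 + Real.exp (-p.1) * ∑ i, dir n (eX n i) φ p ^ 2 := by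
  simp only [nullQ, pT_eq_dir h, pX_eq_dir h]
  simp only [pow_two]; ring

/-- Nirenberg's observation: composing with `F` turns the linear operator into itself plus
`F''` times the null form. -/
theorem dBox_comp {φ : ℝ × (Fin n → ℝ) → ℝ} {F : ℝ → ℝ} (h : ContDiff ℝ (⊤ : ℕ∞) φ)
    (hF : ContDiff ℝ (⊤ : ℕ∞) F) (p) :
    dBox n (fun p => F (φ p)) p - pT n (fun p => F (φ p)) p =
      deriv F (φ p) * (dBox n φ p - pT n φ p) + deriv (deriv F) (φ p) * nullQ n φ φ p := by
  rw [dBox_sub_eq (φ := fun p => F (φ p)) (hF.comp h), dBox_sub_eq h, nullQ_eq h]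
  simp only [dir_dir_comp h hF, dir_comp h hF, Finset.sum_add_distrib, ← Finset.mul_sum]
  ring

/-- The null form is quadratic in first derivatives, so composing with `F` scales it by `F'²`. -/
theorem nullQ_comp {φ : ℝ × (Fin n → ℝ) → ℝ} {F : ℝ → ℝ} (h : ContDiff ℝ (⊤ : ℕ∞) φ)
    (hF : ContDiff ℝ (⊤ : ℕ∞) F) (p) :
    nullQ n (fun p => F (φ p)) (fun p => F (φ p)) p = deriv F (φ p) ^ 2 * nullQ n φ φ p := by
  rw [nullQ_eq (φ := fun p => F (φ p)) (hF.comp h), nullQ_eq h]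
  simp only [dir_comp h hF, mul_pow, ← Finset.mul_sum]
  ring

/-- The real part of an oscillatory integral with a wave symbol solves the linear equation. -/
theorem WaveSymbol.linear {σ σ' : ℝ → EuclideanSpace ℝ (Fin n) → ℂ}
    (h : WaveSymbol n ((n : ℝ) / 2 + 1) σ σ') (p : ℝ × (Fin n → ℝ)) :
    dBox n (fun p => (oscI n σ p).re) p - pT n (fun p => (oscI n σ p).re) p = 0 := by
  have key : ∀ {F : ℝ × (Fin n → ℝ) → ℂ} {L : ℝ × (Fin n → ℝ) →L[ℝ] ℂ} {p},
      HasFDerivAt F L p → HasFDerivAt (fun p => (F p).re) (Complex.reCLM.comp L) p :=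
    fun hF => Complex.reCLM.hasFDerivAt.comp _ hF
  have h1 : pT n (fun p => (oscI n σ p).re) = fun p => (oscI n σ' p).re := by
    funext p
    rw [pT_eq_of_hasFDerivAt (key (h.hasFDerivAt₁ p))]
    simp [eT, coordX]
  have h2 := pT_eq_of_hasFDerivAt (key (h.hasFDerivAt₂ p))
  have h3 : ∀ {σ σ' : ℝ → EuclideanSpace ℝ (Fin n) → ℂ}, WaveSymbol n ((n : ℝ) / 2 + 1) σ σ' →
      ∀ i, pX n i (fun p => (oscI n σ p).re) = fun p => (oscI n (_root_.mulX n i σ) p).re := by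
    intro σ σ' h i
    funext p
    rw [pX_eq_of_hasFDerivAt i (key (h.hasFDerivAt₁ p))]
    simp [eX, coordX, Pi.single_apply]
  have h4 : pT n (fun p => (oscI n σ' p).re) p = -((n : ℝ) / 2 + 1) * (oscI n σ' p).re +
      Real.exp (-p.1) * ∑ i, (oscI n (_root_.mulX n i (_root_.mulX n i σ)) p).re := by
    rw [h2, ← Complex.re_sum, ← Complex.re_ofReal_mul, ← Complex.re_ofReal_mul, ← Complex.add_re]
    simp only [eT, coordX]
    simp
  simp only [dBox, h1, h4, h3 h, h3 (h.mulX _)]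
  ring

lemma WaveSymbol.pT_re {c : ℝ} {σ σ' : ℝ → EuclideanSpace ℝ (Fin n) → ℂ}
    (h : WaveSymbol n c σ σ') (p : ℝ × (Fin n → ℝ)) :
    pT n (fun p => (oscI n σ p).re) p = (oscI n σ' p).re := by
  have : HasFDerivAt (fun p => (oscI n σ p).re) _ p :=
    Complex.reCLM.hasFDerivAt.comp p (h.hasFDerivAt₁ p)
  rw [pT_eq_of_hasFDerivAt this]
  simp [eT, coordX]
end

/-! ### Integrals of functions compactly supported in space -/

section
variable {n : ℕ}

/-- Compact support in the space variables, locally uniformly in time. -/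
def CptX (n : ℕ) (e : ℝ × (Fin n → ℝ) → ℝ) : Prop :=
  ∀ T : ℝ, ∃ K : Set (Fin n → ℝ), IsCompact K ∧ ∀ t, |t| ≤ T → ∀ x ∉ K, e (t, x) = 0

lemma CptX.mul {e : ℝ × (Fin n → ℝ) → ℝ} (h : CptX n e) (f : ℝ × (Fin n → ℝ) → ℝ) :
    CptX n (fun p => e p * f p) := by
  intro T
  obtain ⟨K, hK, h0⟩ := h T
  exact ⟨K, hK, fun t ht x hx => by simp [h0 t ht x hx]⟩

lemma CptX.dir {e : ℝ × (Fin n → ℝ) → ℝ} (h : CptX n e) (v : ℝ × (Fin n → ℝ)) :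
    CptX n (dir n v e) := by
  intro T
  obtain ⟨K, hK, h0⟩ := h (T + 1)
  refine ⟨K, hK, fun t ht x hx => ?_⟩
  have hev : e =ᶠ[nhds (t, x)] fun _ => 0 := by
    have ho : IsOpen ({s : ℝ | |s| < T + 1} ×ˢ Kᶜ) :=
      (isOpen_lt continuous_abs continuous_const).prod hK.isClosed.isOpen_compl
    filter_upwards [ho.mem_nhds ⟨show |t| < T + 1 by linarith, hx⟩] with q hq
    exact h0 q.1 (le_of_lt hq.1) q.2 hq.2
  rw [_root_.dir, hev.fderiv_eq]
  simp

lemma CptX.hasCompactSupport {e : ℝ × (Fin n → ℝ) → ℝ} (h : CptX n e) (t : ℝ) :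
    HasCompactSupport (fun x => e (t, x)) := by
  obtain ⟨K, hK, h0⟩ := h |t|
  exact HasCompactSupport.intro hK fun x hx => h0 t le_rfl x hx

lemma CptX.integrable {e : ℝ × (Fin n → ℝ) → ℝ} (h : CptX n e) (he : ContDiff ℝ (⊤ : ℕ∞) e)
    (t : ℝ) : Integrable (fun x => e (t, x)) :=
  (he.continuous.comp (Continuous.prodMk_right t)).integrable_of_hasCompactSupport
    (h.hasCompactSupport t)

lemma CptX.hasDerivAt_integral {e : ℝ × (Fin n → ℝ) → ℝ} (h : CptX n e)
    (he : ContDiff ℝ (⊤ : ℕ∞) e) (t : ℝ) :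
    HasDerivAt (fun t => ∫ x, e (t, x)) (∫ x, _root_.dir n (eT n) e (t, x)) t := by
  have hd := contDiff_dir he (eT n)
  obtain ⟨K, hK, h0⟩ := (h.dir (eT n)) (|t| + 1)
  obtain ⟨C, hC⟩ := ((isCompact_Icc (a := -(|t| + 1)) (b := |t| + 1)).prod
    hK).exists_bound_of_continuousOn hd.continuous.continuousOn
  refine (hasDerivAt_integral_of_dominated_loc_of_deriv_le (s := Metric.ball t 1)
    (bound := K.indicator fun _ => C) (F := fun t x => e (t, x))
    (F' := fun t x => _root_.dir n (eT n) e (t, x)) (Metric.ball_mem_nhds t one_pos)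
    (Filter.Eventually.of_forall fun s => (h.integrable he s).aestronglyMeasurable)
    (h.integrable he t) ((h.dir (eT n)).integrable hd t).aestronglyMeasurable
    (ae_of_all _ fun x s hs => ?_) ?_ (ae_of_all _ fun x s _ => ?_)).2
  · have hs1 : |s| ≤ |t| + 1 := by
      have h1 : |s - t| < 1 := hs
      have := abs_add_le t (s - t)
      rw [add_sub_cancel] at this
      linarith
    by_cases hx : x ∈ K
    · rw [Set.indicator_of_mem hx]
      exact hC (s, x) ⟨abs_le.1 hs1, hx⟩
    · rw [Set.indicator_of_notMem hx, h0 s hs1 x hx, norm_zero]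
  · exact (integrable_indicator_iff hK.measurableSet).2 (integrableOn_const hK.measure_lt_top.ne)
  · exact hasDerivAt_time (he.differentiable (by simp) (s, x)).hasFDerivAt

/-- Divergence terms integrate to zero. -/
lemma CptX.integral_dir_space {e : ℝ × (Fin n → ℝ) → ℝ} (h : CptX n e)
    (he : ContDiff ℝ (⊤ : ℕ∞) e) (i : Fin n) (t : ℝ) :
    ∫ x, _root_.dir n (eX n i) e (t, x) = 0 := by
  have hF : ∀ x, fderiv ℝ (fun x => e (t, x)) x (Pi.single i 1) =
      _root_.dir n (eX n i) e (t, x) := by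
    intro x
    have h1 : HasFDerivAt (fun x => e (t, x)) _ x :=
      (he.differentiable (by simp) (t, x)).hasFDerivAt.comp x (hasFDerivAt_prodMk_right t x)
    rw [h1.fderiv]; rfl
  have hi := (h.dir (eX n i)).integrable (contDiff_dir he _) t
  have := integral_mul_fderiv_eq_neg_fderiv_mul_of_integrable
    (μ := (volume : Measure (Fin n → ℝ))) (f := fun _ => (1 : ℝ)) (g := fun x => e (t, x))
    (v := Pi.single i 1) (by simp) (by simpa [hF] using hi) (by simpa using h.integrable he t)
    (fun x _ => differentiableAt_const _) (fun x _ =>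
      ((he.differentiable (by simp) (t, x)).hasFDerivAt.comp x
        (hasFDerivAt_prodMk_right t x)).differentiableAt)
  simpa [hF] using this
end

/-! ### The local energy inequality -/

section
variable {n : ℕ}

/-- The defining function of the solid paraboloid `|x - x₀|² < a² - 2 a t` with vertex `(a / 2, x₀)`,
a smooth substitute for a backward cone. In it `|x - x₀| ≤ a` for `t ≥ 0`, so its boundary recedes
at speed at least `1`, which dominates the speed `e^{-t/2}` of propagation. -/
def coneFn (n : ℕ) (a : ℝ) (x₀ : Fin n → ℝ) (p : ℝ × (Fin n → ℝ)) : ℝ :=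
  a ^ 2 - 2 * a * p.1 - ∑ i, (p.2 i - x₀ i) ^ 2

/-- A smooth weight, positive exactly where `coneFn` is. -/
noncomputable def coneW (n : ℕ) (a : ℝ) (x₀ : Fin n → ℝ) (p : ℝ × (Fin n → ℝ)) : ℝ :=
  expNegInvGlue (coneFn n a x₀ p)

lemma contDiff_glue : ContDiff ℝ (⊤ : ℕ∞) expNegInvGlue := expNegInvGlue.contDiff

lemma contDiff_coneFn (a : ℝ) (x₀ : Fin n → ℝ) : ContDiff ℝ (⊤ : ℕ∞) (coneFn n a x₀) := by
  unfold coneFn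
  have : ∀ i, ContDiff ℝ (⊤ : ℕ∞) (fun p : ℝ × (Fin n → ℝ) => p.2 i) := fun i =>
    (coordX n i).contDiff
  refine (contDiff_const.sub (contDiff_const.mul contDiff_fst)).sub (ContDiff.sum fun i _ => ?_)
  exact ((this i).sub contDiff_const).pow 2

lemma contDiff_coneW (a : ℝ) (x₀ : Fin n → ℝ) : ContDiff ℝ (⊤ : ℕ∞) (coneW n a x₀) :=
  contDiff_glue.comp (contDiff_coneFn a x₀)

lemma cptX_coneW (a : ℝ) (x₀ : Fin n → ℝ) : CptX n (coneW n a x₀) := by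
  intro T
  refine ⟨Metric.closedBall x₀ (a ^ 2 + 2 * |a| * |T| + 1), isCompact_closedBall _ _,
    fun t ht x hx => ?_⟩
  by_contra h
  apply hx
  have h1 : 0 < coneFn n a x₀ (t, x) := by
    by_contra h2
    exact h (expNegInvGlue.zero_of_nonpos (not_lt.1 h2))
  simp only [coneFn] at h1
  have h3 : -(a * t) ≤ |a| * |T| := by
    have h4 : |a * t| ≤ |a| * |T| := by
      rw [abs_mul]; exact mul_le_mul_of_nonneg_left (ht.trans (le_abs_self T)) (abs_nonneg a)
    exact (neg_le_abs _).trans h4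
  have hR : 0 ≤ a ^ 2 + 2 * |a| * |T| := by positivity
  rw [Metric.mem_closedBall, dist_pi_le_iff (by positivity)]
  intro i
  have h5 : (x i - x₀ i) ^ 2 ≤ ∑ i, (x i - x₀ i) ^ 2 :=
    Finset.single_le_sum (f := fun i => (x i - x₀ i) ^ 2) (fun j _ => sq_nonneg _)
      (Finset.mem_univ i)
  rw [Real.dist_eq]
  refine abs_le_of_sq_le_sq ?_ (by positivity)
  nlinarith

lemma dir_coneFn_time (a : ℝ) (x₀ : Fin n → ℝ) (p) : dir n (eT n) (coneFn n a x₀) p = -2 * a := by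
  have h1 := hasDerivAt_time (x := p.2) (t := p.1)
    ((contDiff_coneFn a x₀).differentiable (by simp) p).hasFDerivAt
  have h2 : HasDerivAt (fun s => coneFn n a x₀ (s, p.2)) (-2 * a) p.1 := by
    simp only [coneFn]
    refine ((((hasDerivAt_id p.1).const_mul (2 * a)).const_sub (a ^ 2)).sub_const _).congr_deriv ?_
    ring
  exact h1.unique h2

lemma dir_coneFn_space (a : ℝ) (x₀ : Fin n → ℝ) (i : Fin n) (p) :
    dir n (eX n i) (coneFn n a x₀) p = -2 * (p.2 i - x₀ i) := by
  have h1 := hasDerivAt_space (x := p.2) (t := p.1) i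
    ((contDiff_coneFn a x₀).differentiable (by simp) p).hasFDerivAt
  have h2 : HasDerivAt (fun s => coneFn n a x₀ (p.1, Function.update p.2 i s))
      (-2 * (p.2 i - x₀ i)) (p.2 i) := by
    simp only [coneFn]
    have h3 : ∀ j, HasDerivAt (fun s => (Function.update p.2 i s j - x₀ j) ^ 2)
        (2 * (p.2 j - x₀ j) * (Pi.single i (1 : ℝ) : Fin n → ℝ) j) (p.2 i) := by
      intro j
      have := ((hasDerivAt_pi.1 (hasDerivAt_update p.2 i (p.2 i)) j).sub_const (x₀ j)).fun_pow 2
      simpa using this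
    refine ((HasDerivAt.fun_sum (u := Finset.univ) fun j _ => h3 j).const_sub _).congr_deriv ?_
    simp [Pi.single_apply]
  exact h1.unique h2

lemma deriv_glue_nonneg (y : ℝ) : 0 ≤ deriv expNegInvGlue y := expNegInvGlue.monotone.deriv_nonneg

lemma deriv_glue_of_neg {y : ℝ} (hy : y < 0) : deriv expNegInvGlue y = 0 := by
  have : expNegInvGlue =ᶠ[nhds y] fun _ => 0 := by
    filter_upwards [gt_mem_nhds hy] with z hz
    exact expNegInvGlue.zero_of_nonpos (le_of_lt hz)
  rw [this.deriv_eq]; simp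

/-- Energy density of the linear equation. -/
noncomputable def eDens (n : ℕ) (w : ℝ × (Fin n → ℝ) → ℝ) (p : ℝ × (Fin n → ℝ)) : ℝ :=
  dir n (eT n) w p ^ 2 + Real.exp (-p.1) * ∑ i, dir n (eX n i) w p ^ 2

/-- Energy flux of the linear equation in the `i`-th direction. -/
noncomputable def eFlux (n : ℕ) (w : ℝ × (Fin n → ℝ) → ℝ) (i : Fin n) (p : ℝ × (Fin n → ℝ)) : ℝ :=
  2 * Real.exp (-p.1) * (dir n (eT n) w p * dir n (eX n i) w p)

lemma contDiff_expT : ContDiff ℝ (⊤ : ℕ∞) (fun p : ℝ × (Fin n → ℝ) => 2 * Real.exp (-p.1)) :=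
  contDiff_const.mul (Real.contDiff_exp.comp contDiff_fst.neg)

variable {w : ℝ × (Fin n → ℝ) → ℝ}

lemma contDiff_eDens (hw : ContDiff ℝ (⊤ : ℕ∞) w) : ContDiff ℝ (⊤ : ℕ∞) (eDens n w) := by
  refine ((contDiff_dir hw _).pow 2).add ((Real.contDiff_exp.comp contDiff_fst.neg).mul ?_)
  exact ContDiff.sum fun i _ => (contDiff_dir hw _).pow 2

lemma contDiff_eFlux (hw : ContDiff ℝ (⊤ : ℕ∞) w) (i : Fin n) :
    ContDiff ℝ (⊤ : ℕ∞) (eFlux n w i) :=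
  contDiff_expT.mul ((contDiff_dir hw _).mul (contDiff_dir hw _))

lemma dir_eDens (hw : ContDiff ℝ (⊤ : ℕ∞) w) (p) :
    dir n (eT n) (eDens n w) p =
      2 * dir n (eT n) w p * dir n (eT n) (dir n (eT n) w) p
      - Real.exp (-p.1) * ∑ i, dir n (eX n i) w p ^ 2
      + Real.exp (-p.1) * ∑ i, 2 * dir n (eX n i) w p * dir n (eX n i) (dir n (eT n) w) p := by
  have h1 := hasDerivAt_time (x := p.2) (t := p.1)
    ((contDiff_eDens hw).differentiable (by simp) p).hasFDerivAt
  have hD : ∀ v, HasDerivAt (fun s => dir n v w (s, p.2)) (dir n (eT n) (dir n v w) p) p.1 :=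
    fun v => hasDerivAt_time ((contDiff_dir hw v).differentiable (by simp) p).hasFDerivAt
  refine h1.unique ?_
  simp only [eDens]
  have hE : HasDerivAt (fun s : ℝ => Real.exp (-s)) (-Real.exp (-p.1)) p.1 := by
    simpa using (hasDerivAt_neg p.1).exp
  refine (((hD (eT n)).pow 2).add (hE.mul (HasDerivAt.fun_sum (u := Finset.univ)
    fun i _ => (hD (eX n i)).pow 2))).congr_deriv ?_
  simp only [dir_comm hw (eT n) (eX n _)]
  simp
  ring

lemma dir_eFlux (hw : ContDiff ℝ (⊤ : ℕ∞) w) (i : Fin n) (p) :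
    dir n (eX n i) (eFlux n w i) p = 2 * Real.exp (-p.1) *
      (dir n (eX n i) (dir n (eT n) w) p * dir n (eX n i) w p +
        dir n (eT n) w p * dir n (eX n i) (dir n (eX n i) w) p) := by
  have h1 := contDiff_dir hw (eT n)
  have h2 := contDiff_dir hw (eX n i)
  have hE : dir n (eX n i) (fun p : ℝ × (Fin n → ℝ) => 2 * Real.exp (-p.1)) p = 0 :=
    (hasDerivAt_space (x := p.2) (t := p.1) i
      (contDiff_expT.differentiable (by simp) p).hasFDerivAt).unique
      (hasDerivAt_const (p.2 i) (2 * Real.exp (-p.1)))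
  have := dir_mul contDiff_expT (h1.mul h2) (eX n i) p
  rw [hE, dir_mul h1 h2] at this
  refine this.trans ?_
  ring

/-- The weighted energy inequality in differential form. Differentiating the weight produces a
nonpositive term because the boundary of the paraboloid is spacelike; the remaining terms are
damping. -/
lemma energy_pointwise (hw : ContDiff ℝ (⊤ : ℕ∞) w) {a : ℝ} (ha : 0 < a) (x₀ : Fin n → ℝ)
    (p : ℝ × (Fin n → ℝ)) (hp : 0 ≤ p.1) (hL : dBox n w p - pT n w p = 0) :
    dir n (eT n) (fun p => coneW n a x₀ p * eDens n w p) p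
      - ∑ i, dir n (eX n i) (fun p => coneW n a x₀ p * eFlux n w i p) p ≤ 0 := by
  rw [dBox_sub_eq hw] at hL
  have hρ := contDiff_coneW a x₀
  have hρT : dir n (eT n) (coneW n a x₀) p = deriv expNegInvGlue (coneFn n a x₀ p) * (-2 * a) := by
    have := dir_comp (contDiff_coneFn a x₀) contDiff_glue (eT n) p
    rwa [dir_coneFn_time] at this
  have hρX : ∀ i, dir n (eX n i) (coneW n a x₀) p =
      deriv expNegInvGlue (coneFn n a x₀ p) * (-2 * (p.2 i - x₀ i)) := fun i => by
    have := dir_comp (contDiff_coneFn a x₀) contDiff_glue (eX n i) p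
    rwa [dir_coneFn_space] at this
  have hsum : ∑ i, dir n (eX n i) (fun p => coneW n a x₀ p * eFlux n w i p) p =
      -4 * Real.exp (-p.1) * deriv expNegInvGlue (coneFn n a x₀ p) * dir n (eT n) w p *
        ∑ i, (p.2 i - x₀ i) * dir n (eX n i) w p
      + coneW n a x₀ p * (Real.exp (-p.1) *
        ∑ i, 2 * dir n (eX n i) w p * dir n (eX n i) (dir n (eT n) w) p)
      + coneW n a x₀ p * (2 * dir n (eT n) w p) * (Real.exp (-p.1) *
        ∑ i, dir n (eX n i) (dir n (eX n i) w) p) := by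
    simp only [Finset.mul_sum, ← Finset.sum_add_distrib]
    refine Finset.sum_congr rfl fun i _ => ?_
    rw [dir_mul hρ (contDiff_eFlux hw i), hρX, dir_eFlux hw]
    simp only [eFlux]
    ring
  rw [dir_mul hρ (contDiff_eDens hw), hρT, dir_eDens hw, hsum]
  have hCS : (∑ i, (p.2 i - x₀ i) * dir n (eX n i) w p) ^ 2 ≤
      (∑ i, (p.2 i - x₀ i) ^ 2) * ∑ i, dir n (eX n i) w p ^ 2 :=
    Finset.sum_mul_sq_le_sq_mul_sq _ _ _
  have hS : 0 ≤ ∑ i, dir n (eX n i) w p ^ 2 := Finset.sum_nonneg fun i _ => sq_nonneg _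
  have hρ0 : 0 ≤ coneW n a x₀ p := expNegInvGlue.nonneg _
  have hE0 : 0 < Real.exp (-p.1) := Real.exp_pos _
  have hE1 : Real.exp (-p.1) ≤ 1 := Real.exp_le_one_iff.2 (by linarith)
  have hm := deriv_glue_nonneg (coneFn n a x₀ p)
  have hn0 : (0 : ℝ) ≤ n := Nat.cast_nonneg n
  simp only [eDens]
  -- Outside the paraboloid the weight is locally constant, inside it `|x - x₀| ≤ a`.
  have hcone : coneFn n a x₀ p < 0 ∨ ∑ i, (p.2 i - x₀ i) ^ 2 ≤ a ^ 2 := by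
    by_cases h : coneFn n a x₀ p < 0
    · exact Or.inl h
    · right
      simp only [coneFn, not_lt] at h
      nlinarith [mul_nonneg ha.le hp]
  have hm' : deriv expNegInvGlue (coneFn n a x₀ p) *
      (2 * Real.exp (-p.1) * dir n (eT n) w p * (∑ i, (p.2 i - x₀ i) * dir n (eX n i) w p)
        - a * (dir n (eT n) w p ^ 2 + Real.exp (-p.1) * ∑ i, dir n (eX n i) w p ^ 2)) ≤ 0 := by
    rcases hcone with h | h
    · rw [deriv_glue_of_neg h, zero_mul]
    · refine mul_nonpos_of_nonneg_of_nonpos hm ?_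
      generalize (∑ i, (p.2 i - x₀ i) * dir n (eX n i) w p) = P at *
      generalize (∑ i, dir n (eX n i) w p ^ 2) = S at *
      generalize dir n (eT n) w p = u at *
      generalize Real.exp (-p.1) = E at *
      have hP : P ^ 2 ≤ a ^ 2 * S := hCS.trans (mul_le_mul_of_nonneg_right h hS)
      have h1 : E * P ^ 2 ≤ E * (a ^ 2 * S) := mul_le_mul_of_nonneg_left hP hE0.le
      have h2 : E ^ 2 * P ^ 2 ≤ E * P ^ 2 := by
        have : E * (1 - E) * P ^ 2 ≥ 0 := by
          have : 0 ≤ 1 - E := by linarith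
          positivity
        nlinarith
      have h3 : a * (2 * E * u * P - a * (u ^ 2 + E * S)) ≤ 0 := by
        nlinarith [sq_nonneg (a * u - E * P)]
      by_contra h4
      push Not at h4
      nlinarith [mul_pos ha h4]
  have h5 : 0 ≤ coneW n a x₀ p * ((n + 2) * dir n (eT n) w p ^ 2 +
      Real.exp (-p.1) * ∑ i, dir n (eX n i) w p ^ 2) := by positivity
  linear_combination 2 * hm' + h5 - (coneW n a x₀ p) * 2 * dir n (eT n) w p * hL
end

/-! ### Uniqueness -/

section
variable {n : ℕ} {w : ℝ × (Fin n → ℝ) → ℝ}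

/-- The time derivative of a solution with zero data vanishes at `(t, x₀)`, a point of the paraboloid
with parameter `a` as soon as `2 t < a`. -/
lemma dir_time_eq_zero (hw : ContDiff ℝ (⊤ : ℕ∞) w)
    (hL : ∀ p : ℝ × (Fin n → ℝ), 0 ≤ p.1 → dBox n w p - pT n w p = 0)
    (h0 : ∀ x, w (0, x) = 0) (h1 : ∀ x, pT n w (0, x) = 0) {a : ℝ} (x₀ : Fin n → ℝ) {t : ℝ}
    (ht : 0 ≤ t) (hta : 2 * t < a) : dir n (eT n) w (t, x₀) = 0 := by
  have ha : 0 < a := by linarith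
  have hρ := contDiff_coneW a x₀
  have hc : CptX n (fun p => coneW n a x₀ p * eDens n w p) := (cptX_coneW a x₀).mul _
  have hd : ContDiff ℝ (⊤ : ℕ∞) (fun p => coneW n a x₀ p * eDens n w p) :=
    hρ.mul (contDiff_eDens hw)
  have hcJ : ∀ i, CptX n (fun p => coneW n a x₀ p * eFlux n w i p) :=
    fun i => (cptX_coneW a x₀).mul _
  have hdJ : ∀ i, ContDiff ℝ (⊤ : ℕ∞) (fun p => coneW n a x₀ p * eFlux n w i p) :=
    fun i => hρ.mul (contDiff_eFlux hw i)
  have hpos : ∀ p, 0 ≤ coneW n a x₀ p * eDens n w p := by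
    intro p
    refine mul_nonneg (expNegInvGlue.nonneg _) ?_
    unfold eDens
    positivity
  set E : ℝ → ℝ := fun t => ∫ x, coneW n a x₀ (t, x) * eDens n w (t, x) with hE
  have hder : ∀ s, HasDerivAt E _ s := fun s => hc.hasDerivAt_integral hd s
  have hanti : AntitoneOn E (Set.Ici 0) := by
    refine antitoneOn_of_deriv_nonpos (convex_Ici 0)
      (fun s _ => (hder s).continuousAt.continuousWithinAt)
      (fun s _ => (hder s).differentiableAt.differentiableWithinAt) fun s hs => ?_
    rw [interior_Ici] at hs
    rw [(hder s).deriv]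
    have i1 := (hc.dir (eT n)).integrable (contDiff_dir hd _) s
    have i2 := fun i => ((hcJ i).dir (eX n i)).integrable (contDiff_dir (hdJ i) _) s
    have e1 := integral_sub i1 (integrable_finsetSum Finset.univ fun i _ => i2 i)
    rw [integral_finsetSum _ fun i _ => i2 i] at e1
    simp only [fun i => (hcJ i).integral_dir_space (hdJ i) i s, Finset.sum_const_zero,
      sub_zero] at e1
    rw [← e1]
    exact integral_nonpos fun x => energy_pointwise hw ha x₀ (s, x) (le_of_lt hs) (hL _ (le_of_lt hs))
  have hE0 : E 0 = 0 := by
    have : ∀ x, eDens n w (0, x) = 0 := by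
      intro x
      have hx : ∀ i, dir n (eX n i) w (0, x) = 0 := by
        intro i
        rw [← pX_eq_dir hw]
        simp [pX, h0]
      have ht : dir n (eT n) w (0, x) = 0 := by rw [← pT_eq_dir hw, h1]
      simp [eDens, hx, ht]
    simp [hE, this]
  have hEt : E t = 0 :=
    le_antisymm ((hanti Set.self_mem_Ici ht ht).trans hE0.le) (integral_nonneg fun x => hpos _)
  have hcont : Continuous (fun x => coneW n a x₀ (t, x) * eDens n w (t, x)) :=
    hd.continuous.comp (Continuous.prodMk_right t)
  have hae := (integral_eq_zero_iff_of_nonneg (fun x => hpos (t, x)) (hc.integrable hd t)).1 hEt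
  have hz := congrFun (Continuous.ae_eq_iff_eq volume hcont continuous_const |>.1 hae) x₀
  have hW : 0 < coneW n a x₀ (t, x₀) := by
    refine expNegInvGlue.pos_of_pos ?_
    simp only [coneFn, sub_self]
    simp
    nlinarith
  have hz' : eDens n w (t, x₀) = 0 := by
    rcases mul_eq_zero.1 hz with h | h
    · exact absurd h hW.ne'
    · exact h
  have hS : 0 ≤ Real.exp (-t) * ∑ i, dir n (eX n i) w (t, x₀) ^ 2 := by positivity
  simp only [eDens] at hz'
  have : dir n (eT n) w (t, x₀) ^ 2 = 0 := by
    nlinarith [sq_nonneg (dir n (eT n) w (t, x₀))]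
  exact pow_eq_zero_iff two_ne_zero |>.1 this

/-- Uniqueness for the linear equation. -/
theorem linear_unique (hw : ContDiff ℝ (⊤ : ℕ∞) w)
    (hL : ∀ p : ℝ × (Fin n → ℝ), 0 ≤ p.1 → dBox n w p - pT n w p = 0)
    (h0 : ∀ x, w (0, x) = 0) (h1 : ∀ x, pT n w (0, x) = 0) (p : ℝ × (Fin n → ℝ))
    (hp : 0 ≤ p.1) : w p = 0 := by
  have hder : ∀ s, HasDerivAt (fun s => w (s, p.2)) (dir n (eT n) w (s, p.2)) s := fun s =>
    hasDerivAt_time (hw.differentiable (by simp) (s, p.2)).hasFDerivAt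
  have := constant_of_has_deriv_right_zero (f := fun s => w (s, p.2)) (a := 0) (b := p.1)
    (fun s _ => (hder s).continuousAt.continuousWithinAt) (fun s hs => by
      have := hder s
      rw [dir_time_eq_zero hw hL h0 h1 (a := 2 * s + 1) p.2 hs.1 (by linarith)] at this
      exact this.hasDerivWithinAt) p.1 ⟨hp, le_rfl⟩
  rw [h0] at this
  exact this

lemma dBox_sub {u v : ℝ × (Fin n → ℝ) → ℝ} (hu : ContDiff ℝ (⊤ : ℕ∞) u)
    (hv : ContDiff ℝ (⊤ : ℕ∞) v) (p) :
    dBox n (fun p => u p - v p) p - pT n (fun p => u p - v p) p =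
      (dBox n u p - pT n u p) - (dBox n v p - pT n v p) := by
  have hs : ∀ {u v : ℝ × (Fin n → ℝ) → ℝ}, ContDiff ℝ (⊤ : ℕ∞) u → ContDiff ℝ (⊤ : ℕ∞) v →
      ∀ e, dir n e (fun p => u p - v p) = fun p => dir n e u p - dir n e v p := by
    intro u v hu hv e
    funext p
    have : HasFDerivAt (fun p => u p - v p) _ p := (hu.differentiable (by simp) p).hasFDerivAt.sub
      (hv.differentiable (by simp) p).hasFDerivAt
    rw [dir, this.fderiv]; simp [dir]
  rw [dBox_sub_eq (hu.sub hv), dBox_sub_eq hu, dBox_sub_eq hv]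
  simp only [hs hu hv, hs (contDiff_dir hu _) (contDiff_dir hv _), Finset.sum_sub_distrib]
  ring

/-- Uniqueness for the nonlinear equation, by passing to `e^{-φ}`. -/
theorem nonlinear_unique {φ ψ : ℝ × (Fin n → ℝ) → ℝ} (hφ : ContDiff ℝ (⊤ : ℕ∞) φ)
    (hψ : ContDiff ℝ (⊤ : ℕ∞) ψ)
    (eφ : ∀ p : ℝ × (Fin n → ℝ), 0 ≤ p.1 → dBox n φ p - pT n φ p = nullQ n φ φ p)
    (eψ : ∀ p : ℝ × (Fin n → ℝ), 0 ≤ p.1 → dBox n ψ p - pT n ψ p = nullQ n ψ ψ p)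
    (h0 : ∀ x, ψ (0, x) = φ (0, x)) (h1 : ∀ x, pT n ψ (0, x) = pT n φ (0, x))
    (p : ℝ × (Fin n → ℝ)) (hp : 0 ≤ p.1) : ψ p = φ p := by
  have hF : ContDiff ℝ (⊤ : ℕ∞) (fun y : ℝ => Real.exp (-y)) := Real.contDiff_exp.comp contDiff_neg
  have hF1 : deriv (fun y : ℝ => Real.exp (-y)) = fun y => -Real.exp (-y) := by
    funext y; simpa using ((hasDerivAt_neg y).exp).deriv
  have hF2 : deriv (deriv (fun y : ℝ => Real.exp (-y))) = fun y => Real.exp (-y) := by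
    funext y
    rw [hF1]
    simpa using ((hasDerivAt_neg y).exp.neg).deriv
  have hlin : ∀ {φ : ℝ × (Fin n → ℝ) → ℝ}, ContDiff ℝ (⊤ : ℕ∞) φ →
      (∀ p : ℝ × (Fin n → ℝ), 0 ≤ p.1 → dBox n φ p - pT n φ p = nullQ n φ φ p) →
      ∀ p : ℝ × (Fin n → ℝ), 0 ≤ p.1 →
        dBox n (fun p => Real.exp (-φ p)) p - pT n (fun p => Real.exp (-φ p)) p = 0 := by
    intro φ hφ eφ p hp
    have := dBox_comp hφ hF p
    rw [this, hF2, hF1, eφ p hp]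
    ring
  have hu : ContDiff ℝ (⊤ : ℕ∞) (fun p => Real.exp (-φ p)) := hF.comp hφ
  have hv : ContDiff ℝ (⊤ : ℕ∞) (fun p => Real.exp (-ψ p)) := hF.comp hψ
  have hw := linear_unique (w := fun p => Real.exp (-ψ p) - Real.exp (-φ p)) (hv.sub hu)
    (fun p hp => by rw [dBox_sub hv hu, hlin hφ eφ p hp, hlin hψ eψ p hp, sub_zero])
    (fun x => by simp [h0]) (fun x => ?_) p hp
  · exact neg_injective (Real.exp_injective (sub_eq_zero.1 hw))
  · have d1 := (hasDerivAt_time (hφ.differentiable (by simp) (0, x)).hasFDerivAt).neg.exp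
    have d2 := (hasDerivAt_time (hψ.differentiable (by simp) (0, x)).hasFDerivAt).neg.exp
    have e : dir n (eT n) ψ (0, x) = dir n (eT n) φ (0, x) := by
      rw [← pT_eq_dir hψ, ← pT_eq_dir hφ, h1]
    have := (d2.sub d1).deriv
    refine this.trans ?_
    simp only [dir] at e
    simp [h0, e]
end

/-! ### Inverting the Nirenberg transformation -/

section
variable {n : ℕ}

/-- A globally smooth function that agrees with `-log (1 - y)` for `y ≤ 1/2`: the argument of the
logarithm is cut off so that it stays positive. -/
noncomputable def cutLog (y : ℝ) : ℝ :=
  -Real.log (1 + Real.smoothTransition (4 * (1 - y) - 1) * ((1 - y) - 1))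

lemma cutLog_contDiff : ContDiff ℝ (⊤ : ℕ∞) cutLog := by
  unfold cutLog
  have h : ContDiff ℝ (⊤ : ℕ∞)
      (fun y : ℝ => 1 + Real.smoothTransition (4 * (1 - y) - 1) * ((1 - y) - 1)) := by
    have h1 : ContDiff ℝ (⊤ : ℕ∞) (fun y : ℝ => Real.smoothTransition (4 * (1 - y) - 1)) :=
      (Real.smoothTransition.contDiff (n := (⊤ : ℕ∞))).comp (by fun_prop)
    exact contDiff_const.add (h1.mul (by fun_prop))
  refine (h.log fun y => ne_of_gt ?_).neg
  have h0 := Real.smoothTransition.nonneg (4 * (1 - y) - 1)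
  have h1 := Real.smoothTransition.le_one (4 * (1 - y) - 1)
  rcases le_or_gt (4 * (1 - y) - 1) 0 with hy | hy
  · rw [Real.smoothTransition.zero_of_nonpos hy]; norm_num
  · nlinarith

lemma cutLog_eq {y : ℝ} (hy : y ≤ 1 / 2) : cutLog y = -Real.log (1 - y) := by
  rw [cutLog, Real.smoothTransition.one_of_one_le (by linarith)]
  congr 2; ring

lemma deriv_cutLog {y : ℝ} (hy : y < 1 / 2) : deriv cutLog y = (1 - y)⁻¹ := by
  have e : cutLog =ᶠ[nhds y] fun z => -Real.log (1 - z) := by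
    filter_upwards [Iio_mem_nhds hy] with z hz using cutLog_eq (le_of_lt hz)
  have hd : HasDerivAt (fun z : ℝ => -Real.log (1 - z)) (-(-1 / (1 - y))) y :=
    (((hasDerivAt_id y).const_sub 1).log (by simp only [id]; linarith)).neg
  rw [e.deriv_eq, hd.deriv]; ring

/-- `F'' = F'²` is the equation making `F` turn linear waves into solutions of the nonlinear
equation. -/
lemma deriv_deriv_cutLog {y : ℝ} (hy : y < 1 / 2) :
    deriv (deriv cutLog) y = deriv cutLog y ^ 2 := by
  have e : deriv cutLog =ᶠ[nhds y] fun z => (1 - z)⁻¹ := by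
    filter_upwards [Iio_mem_nhds hy] with z hz using deriv_cutLog hz
  have hd : HasDerivAt (fun z : ℝ => (1 - z)⁻¹) (-(-1) / (1 - y) ^ 2) y :=
    ((hasDerivAt_id y).const_sub 1).fun_inv (by simp only [id]; linarith)
  rw [e.deriv_eq, hd.deriv, deriv_cutLog hy]
  simp

open scoped FourierTransform in
/-- For small data the linear problem satisfied by `1 - e^{-φ}` has a solution that stays
below `1/2`. -/
theorem exists_linear {f g : (Fin n → ℝ) → ℝ}
    (hf : ContDiff ℝ (⊤ : ℕ∞) f) (hfc : HasCompactSupport f)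
    (hg : ContDiff ℝ (⊤ : ℕ∞) g) (hgc : HasCompactSupport g) :
    ∃ ε0 : ℝ, 0 < ε0 ∧ ∀ ε : ℝ, 0 ≤ ε → ε ≤ ε0 →
      ∃ v : ℝ × (Fin n → ℝ) → ℝ, ContDiff ℝ (⊤ : ℕ∞) v ∧
        (∀ p, dBox n v p - pT n v p = 0) ∧
        (∀ p : ℝ × (Fin n → ℝ), 0 ≤ p.1 → v p < 1 / 2) ∧
        (∀ x, v (0, x) = 1 - Real.exp (-(ε * f x))) ∧
        (∀ x, pT n v (0, x) = ε * g x * Real.exp (-(ε * f x))) := by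
  let E := EuclideanSpace ℝ (Fin n)
  have hof : ContDiff ℝ (⊤ : ℕ∞) (fun q : ℝ × E => WithLp.ofLp q.2) :=
    (PiLp.continuousLinearEquiv 2 ℝ (fun _ : Fin n => ℝ)).contDiff.comp contDiff_snd
  have hf' : ContDiff ℝ (⊤ : ℕ∞) (fun q : ℝ × E => q.1 * f (WithLp.ofLp q.2)) :=
    contDiff_fst.mul (hf.comp hof)
  have hg' : ContDiff ℝ (⊤ : ℕ∞) (fun q : ℝ × E => q.1 * g (WithLp.ofLp q.2)) :=
    contDiff_fst.mul (hg.comp hof)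
  have he : ContDiff ℝ (⊤ : ℕ∞) (fun q : ℝ × E => Real.exp (-(q.1 * f (WithLp.ofLp q.2)))) :=
    hf'.neg.exp
  have hG0 : ContDiff ℝ (⊤ : ℕ∞)
      (fun q : ℝ × E => ((1 - Real.exp (-(q.1 * f (WithLp.ofLp q.2))) : ℝ) : ℂ)) :=
    Complex.ofRealCLM.contDiff.comp (contDiff_const.sub he)
  have hG1 : ContDiff ℝ (⊤ : ℕ∞) (fun q : ℝ × E =>
      ((q.1 * g (WithLp.ofLp q.2) * Real.exp (-(q.1 * f (WithLp.ofLp q.2))) : ℝ) : ℂ)) :=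
    Complex.ofRealCLM.contDiff.comp (hg'.mul he)
  have hcont : Continuous (fun x : Fin n → ℝ => (WithLp.toLp 2 x : E)) :=
    PiLp.continuous_toLp 2 _
  have hK : ∀ {h : (Fin n → ℝ) → ℝ}, HasCompactSupport h →
      IsCompact ((fun x : Fin n → ℝ => (WithLp.toLp 2 x : E)) '' tsupport h) :=
    fun hc => hc.isCompact.image hcont
  have hz : ∀ {h : (Fin n → ℝ) → ℝ} {y : E},
      y ∉ (fun x : Fin n → ℝ => (WithLp.toLp 2 x : E)) '' tsupport h → h (WithLp.ofLp y) = 0 :=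
    fun {h y} hy => image_eq_zero_of_notMem_tsupport fun hm => hy ⟨_, hm, rfl⟩
  -- Both data vanish outside fixed compact sets and at `ε = 0`, hence are small in Schwartz space.
  obtain ⟨u0, hu0, ht0⟩ := schwartz_family hG0 (hK hfc)
    (fun ε x hx => by simp [hz hx]) (fun x => by simp)
  obtain ⟨u1, hu1, ht1⟩ := schwartz_family hG1 (hK hgc)
    (fun ε x hx => by simp [hz hx]) (fun x => by simp)
  obtain ⟨δ, hδ, hsmall⟩ := Metric.eventually_nhds_iff.1
    ((specBound_tendsto ht0 ht1).eventually (gt_mem_nhds (show (0 : ℝ) < 1 / 2 by norm_num)))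
  refine ⟨δ / 2, by positivity, fun ε hε hε' => ?_⟩
  have hS : specBound (𝓕 (u0 ε)) (𝓕 (u1 ε)) < 1 / 2 :=
    hsmall (by rw [Real.dist_eq, sub_zero, abs_of_nonneg hε]; linarith)
  have hc : (1 : ℝ) ≤ (n : ℝ) / 2 + 1 := by
    have : (0 : ℝ) ≤ n := n.cast_nonneg
    linarith
  obtain ⟨σ, σ', hσ, i0, i1, hb⟩ := exists_waveSymbol hc (𝓕 (u0 ε)) (𝓕 (u1 ε))
  refine ⟨fun p => (oscI n σ p).re, Complex.reCLM.contDiff.comp hσ.contDiff, hσ.linear,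
    fun p hp => ?_, fun x => ?_, fun x => ?_⟩
  · exact ((Complex.re_le_norm _).trans (norm_oscI_le _ _ hb p hp)).trans_lt hS
  · simp only [oscI_initial (u0 ε) i0 x, hu0, Complex.ofReal_re]
  · rw [hσ.pT_re, oscI_initial (u1 ε) i1 x, hu1, Complex.ofReal_re]
end

/-- Global existence and uniqueness for the null-form wave equation
`□_gφ - φₜ = Q(φ,φ)` in de Sitter spacetime with small compactly supported data. -/
theorem stmt15 (n : ℕ) (hn : 1 ≤ n) (f g : (Fin n → ℝ) → ℝ)
    (hf : ContDiff ℝ (⊤ : ℕ∞) f) (hfc : HasCompactSupport f)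
    (hg : ContDiff ℝ (⊤ : ℕ∞) g) (hgc : HasCompactSupport g) :
    ∃ ε0 : ℝ, 0 < ε0 ∧ ∀ ε : ℝ, 0 ≤ ε → ε ≤ ε0 →
      ∃ φ : ℝ × (Fin n → ℝ) → ℝ, ContDiff ℝ (⊤ : ℕ∞) φ ∧
        (∀ p : ℝ × (Fin n → ℝ), 0 ≤ p.1 →
          dBox n φ p - pT n φ p = nullQ n φ φ p) ∧
        (∀ x : Fin n → ℝ, φ (0, x) = ε * f x) ∧
        (∀ x : Fin n → ℝ, pT n φ (0, x) = ε * g x) ∧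
        (∀ ψ : ℝ × (Fin n → ℝ) → ℝ, ContDiff ℝ (⊤ : ℕ∞) ψ →
          (∀ p : ℝ × (Fin n → ℝ), 0 ≤ p.1 →
            dBox n ψ p - pT n ψ p = nullQ n ψ ψ p) →
          (∀ x : Fin n → ℝ, ψ (0, x) = ε * f x) →
          (∀ x : Fin n → ℝ, pT n ψ (0, x) = ε * g x) →
          ∀ p : ℝ × (Fin n → ℝ), 0 ≤ p.1 → ψ p = φ p) := by
  obtain ⟨ε0, hε0, H⟩ := exists_linear hf hfc hg hgc
  refine ⟨ε0, hε0, fun ε h1 h2 => ?_⟩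
  obtain ⟨v, hv, hlin, hlt, hv0, hv1⟩ := H ε h1 h2
  have hφ : ContDiff ℝ (⊤ : ℕ∞) (fun p => cutLog (v p)) := cutLog_contDiff.comp hv
  -- `F = cutLog` satisfies `F'' = F'²` on the range of `v`, and `v` solves the linear equation.
  have heq : ∀ p : ℝ × (Fin n → ℝ), 0 ≤ p.1 →
      dBox n (fun p => cutLog (v p)) p - pT n (fun p => cutLog (v p)) p =
        nullQ n (fun p => cutLog (v p)) (fun p => cutLog (v p)) p := fun p hp => by
    rw [dBox_comp hv cutLog_contDiff, nullQ_comp hv cutLog_contDiff, hlin,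
      deriv_deriv_cutLog (hlt p hp)]
    ring
  have hi0 : ∀ x : Fin n → ℝ, cutLog (v (0, x)) = ε * f x := fun x => by
    rw [cutLog_eq (hlt (0, x) le_rfl).le, hv0]
    simp
  have hi1 : ∀ x : Fin n → ℝ, pT n (fun p => cutLog (v p)) (0, x) = ε * g x := fun x => by
    rw [pT_eq_dir hφ, dir_comp hv cutLog_contDiff, ← pT_eq_dir hv,
      deriv_cutLog (hlt (0, x) le_rfl), hv0, hv1, sub_sub_cancel]
    field_simp
  exact ⟨_, hφ, heq, hi0, hi1, fun ψ hψ eψ k0 k1 p hp =>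
    nonlinear_unique hφ hψ heq eψ (fun x => (k0 x).trans (hi0 x).symm)
      (fun x => (k1 x).trans (hi1 x).symm) p hp⟩
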